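/- Let Ω ⊂ ℝ² be a bounded, open, connected set with Lipschitz boundary and let u ∈ W^{1,1}(Ω;S¹) be such that ⟨Det(∇u),φ⟩ = π Σ_{i=1}^∞ (φ(x_i) − φ(y_i)) for all φ ∈ Lip₀(Ω), where x_i, y_i ∈ cl(Ω), x_i ≠ y_i and Σ_{i=1}^∞ |x_i − y_i| < +∞. Then for every ε > 0 there exist u_ε ∈ W^{1,1}(Ω;S¹) and N_ε ∈ ℕ such that: (i) ⟨Det(∇u_ε),φ⟩ = π Σ_{i=1}^{N_ε} (φ(x_i) − φ(y_i)) for all φ ∈ Lip₀(Ω); (ii) ‖u − u_ε‖_{W^{1,1}} + ‖Det(∇u) − Det(∇u_ε)‖_flat < ε. -/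

import Mathlib

open MeasureTheory Metric Filter Set
open scoped ENNReal NNReal Topology Classical

noncomputable section

abbrev R2 := EuclideanSpace ℝ (Fin 2)

/-- `Ω ⊂ ℝ²` has Lipschitz boundary: near every boundary point, after a rigid motion,
`Ω` coincides with the open region strictly above the graph of a Lipschitz function. -/
def HasLipschitzBoundary (Ω : Set R2) : Prop :=
  ∀ p ∈ frontier Ω, ∃ r : ℝ, 0 < r ∧ ∃ (f : R2 ≃ᵢ R2) (γ : ℝ → ℝ) (L : ℝ≥0),
    LipschitzWith L γ ∧ ∀ x ∈ Metric.ball p r, (x ∈ Ω ↔ γ (f x 0) < f x 1)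

/-- `G` is the weak (distributional) gradient of `u` on `Ω`:
`∫_Ω u_i ∂_j φ = -∫_Ω G_{ij} φ` for all test functions `φ ∈ C_c^∞(Ω)`. -/
def IsWeakGradient (Ω : Set R2) (u : R2 → R2) (G : R2 → Matrix (Fin 2) (Fin 2) ℝ) : Prop :=
  ∀ φ : R2 → ℝ, ContDiff ℝ (⊤ : ℕ∞) φ → HasCompactSupport φ → tsupport φ ⊆ Ω →
    ∀ i j : Fin 2,
      (∫ x in Ω, u x i * fderiv ℝ φ x (EuclideanSpace.single j 1)) =
        - ∫ x in Ω, G x i j * φ x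

/-- `u ∈ W^{1,1}(Ω;ℝ²)` with weak gradient `G`. -/
def MemW11 (Ω : Set R2) (u : R2 → R2) (G : R2 → Matrix (Fin 2) (Fin 2) ℝ) : Prop :=
  IntegrableOn u Ω ∧ (∀ i j : Fin 2, IntegrableOn (fun x => G x i j) Ω) ∧
    IsWeakGradient Ω u G

/-- `|u| = 1` a.e. in `Ω`. -/
def SphereValued (Ω : Set R2) (u : R2 → R2) : Prop :=
  ∀ᵐ x ∂(volume.restrict Ω), ‖u x‖ = 1

/-- Frobenius norm of a `2×2` matrix. -/
def frob (M : Matrix (Fin 2) (Fin 2) ℝ) : ℝ :=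
  Real.sqrt (∑ i, ∑ j, (M i j) ^ 2)

/-- Jacobian matrix of a map `v : ℝ² → ℝ²`. -/
def jacobianMatrix (v : R2 → R2) (x : R2) : Matrix (Fin 2) (Fin 2) ℝ :=
  Matrix.of fun i j => fderiv ℝ v x (EuclideanSpace.single j 1) i

/-- Classical graph area `A(v,A) = ∫_A √(1 + |∇v|² + (Jv)²)` of a `C¹` map. -/
def classicalArea (A : Set R2) (v : R2 → R2) : ℝ≥0∞ :=
  ∫⁻ x in A, ENNReal.ofReal
    (Real.sqrt (1 + (∑ i, ∑ j, (jacobianMatrix v x i j) ^ 2) + (jacobianMatrix v x).det ^ 2))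

/-- `L¹`-relaxed area functional `𝒜(u,A)`. -/
def relaxedArea (u : R2 → R2) (A : Set R2) : ℝ≥0∞ :=
  sInf { a : ℝ≥0∞ | ∃ v : ℕ → R2 → R2,
    (∀ k, ContDiffOn ℝ 1 (v k) A) ∧
    (∀ k, IntegrableOn (fun x => v k x - u x) A) ∧
    Tendsto (fun k => ∫ x in A, ‖v k x - u x‖) atTop (nhds 0) ∧
    a = Filter.liminf (fun k => classicalArea A (v k)) atTop }

/-- `λ_u = (1/2)(u₁ ∇^⊥u₂ − u₂ ∇^⊥u₁)`, computed from the weak gradient `G`. -/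
def lambdaVec (u : R2 → R2) (G : R2 → Matrix (Fin 2) (Fin 2) ℝ) (x : R2) : Fin 2 → ℝ :=
  ![ (1 / 2) * (-(u x 0) * G x 1 1 + u x 1 * G x 0 1),
     (1 / 2) * (u x 0 * G x 1 0 - u x 1 * G x 0 0) ]

/-- Distributional Jacobian pairing `⟨Det(∇u), φ⟩ = ∫_Ω λ_u · ∇φ`. -/
def detPairing (Ω : Set R2) (u : R2 → R2) (G : R2 → Matrix (Fin 2) (Fin 2) ℝ)
    (φ : R2 → ℝ) : ℝ :=
  ∫ x in Ω, ∑ j, lambdaVec u G x j * fderiv ℝ φ x (EuclideanSpace.single j 1)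

/-- `φ ∈ Lip₀(Ω)`: Lipschitz on `cl(Ω)` and vanishing on `∂Ω`. -/
def MemLip0 (Ω : Set R2) (φ : R2 → ℝ) : Prop :=
  (∃ L : ℝ≥0, LipschitzOnWith L φ (closure Ω)) ∧ ∀ p ∈ frontier Ω, φ p = 0

/-- Admissible test functions for the flat norm: Lipschitz constant `≤ L` on `cl(Ω)`,
vanishing on `Z`, and bounded by `1` on `cl(Ω)`. -/
def FlatAdmissible (Ω Z : Set R2) (L : ℝ≥0) (φ : R2 → ℝ) : Prop :=
  LipschitzOnWith L φ (closure Ω) ∧ (∀ p ∈ Z, φ p = 0) ∧ ∀ p ∈ closure Ω, |φ p| ≤ 1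

/-- Flat norm of a functional `F`, with vanishing condition on the set `Z`. -/
def flatNormOn (Ω Z : Set R2) (L : ℝ≥0) (F : (R2 → ℝ) → ℝ) : ℝ≥0∞ :=
  ⨆ φ ∈ {φ : R2 → ℝ | FlatAdmissible Ω Z L φ}, ENNReal.ofReal (F φ)

/-- Flat norm of a functional `F` on `Lip₀(Ω)`; `L = 2` gives `‖·‖_{flat,α}` (α = 1/2),
`L = 1` gives `‖·‖_flat`. -/
def flatNorm (Ω : Set R2) (L : ℝ≥0) (F : (R2 → ℝ) → ℝ) : ℝ≥0∞ :=
  flatNormOn Ω (frontier Ω) L F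

/-- `d̄_Ω(x,y) = min{|x−y|, dist(x,∂Ω) + dist(y,∂Ω)}`. -/
def dbar (Ω : Set R2) (x y : R2) : ℝ :=
  min (dist x y) (Metric.infDist x (frontier Ω) + Metric.infDist y (frontier Ω))

/-- Countably subadditive interior envelope `𝒜**(u,V)` (relative to `Ω`). -/
def envA (u : R2 → R2) (Ω V : Set R2) : ℝ≥0∞ :=
  sInf { a : ℝ≥0∞ | ∃ A : ℕ → Set R2,
    (∀ k, IsOpen (A k) ∧ A k ⊆ Ω) ∧ V ⊆ ⋃ k, A k ∧ a = ∑' k, relaxedArea u (A k) }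

/-- Property `(P_f)` for a finite family of pairs of points of `cl(Ω)`. -/
def SatisfiesPf (Ω : Set R2) {n : ℕ} (x y : Fin n → R2) : Prop :=
  (∀ k, (x k ∈ Ω ∧ y k ∈ frontier Ω ∧ dist (x k) (y k) = Metric.infDist (x k) (frontier Ω)) ∨
        (y k ∈ Ω ∧ x k ∈ frontier Ω ∧ dist (x k) (y k) = Metric.infDist (y k) (frontier Ω))) ∧
  ∀ i j, x i ∈ Ω → y j ∈ Ω → x i ≠ y j

/-- The points of the family `x, y` lying in `Ω` are distinct and three by three
not collinear. -/
def InteriorPointsGeneric (Ω : Set R2) {n : ℕ} (x y : Fin n → R2) : Prop :=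
  (∀ a b : Fin n ⊕ Fin n, Sum.elim x y a ∈ Ω → Sum.elim x y b ∈ Ω → a ≠ b →
    Sum.elim x y a ≠ Sum.elim x y b) ∧
  ∀ a b c : Fin n ⊕ Fin n, Sum.elim x y a ∈ Ω → Sum.elim x y b ∈ Ω → Sum.elim x y c ∈ Ω →
    a ≠ b → a ≠ c → b ≠ c →
    ¬ Collinear ℝ ({Sum.elim x y a, Sum.elim x y b, Sum.elim x y c} : Set R2)

/-- `ι(w₁,w₂) = (w₁,−w₂)`. -/
def conjPt (w : R2) : R2 := (WithLp.equiv 2 (Fin 2 → ℝ)).symm ![w 0, -(w 1)]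

/-- `u` is a (positive/negative) vortex around the points of the family lying in `Ω`:
the closed discs of radii `ρ` are contained in `Ω` and pairwise disjoint,
`u(z) = (z−x_i)/|z−x_i|` on `B_{ρ}(x_i)` and `u(z) = ι((z−y_j)/|z−y_j|)` on `B_{ρ}(y_j)`. -/
def VortexAt (Ω : Set R2) (u : R2 → R2) {n : ℕ} (x y : Fin n → R2)
    (ρ : Fin n ⊕ Fin n → ℝ) : Prop :=
  (∀ a, Sum.elim x y a ∈ Ω → Metric.closedBall (Sum.elim x y a) (ρ a) ⊆ Ω) ∧
  (∀ a b, a ≠ b → Sum.elim x y a ∈ Ω → Sum.elim x y b ∈ Ω →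
    Disjoint (Metric.closedBall (Sum.elim x y a) (ρ a))
      (Metric.closedBall (Sum.elim x y b) (ρ b))) ∧
  (∀ i, x i ∈ Ω → ∀ᵐ z ∂(volume.restrict (Metric.ball (x i) (ρ (Sum.inl i)))),
    u z = ‖z - x i‖⁻¹ • (z - x i)) ∧
  (∀ i, y i ∈ Ω → ∀ᵐ z ∂(volume.restrict (Metric.ball (y i) (ρ (Sum.inr i)))),
    u z = conjPt (‖z - y i‖⁻¹ • (z - y i)))

/-- The energy `E(I_P, I_D, τ)` of a partition `{I_Dᶜ, I_D}` of `I` and an injection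
`τ : I_D → I`. -/
def energy (Ω : Set R2) {n : ℕ} (x y : Fin n → R2) (ID : Finset (Fin n))
    (τ : Fin n → Fin n) : ℝ≥0∞ :=
  ((IDᶜ.filter fun k => x k ∈ Ω).card : ℝ≥0∞) +
  (((Finset.univ \ ID.image τ).filter fun j => y j ∈ Ω).card : ℝ≥0∞) +
  2 * ∑ k ∈ ID, μH[1] (segment ℝ (y (τ k)) (x k) ∩ Ω)

/-! ### Complex variables -/

/-- The isometry `ℝ² ≃ ℂ`. -/
def cc : R2 ≃ₗᵢ[ℝ] ℂ := Complex.orthonormalBasisOneI.repr.symm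

lemma cc_apply (z : R2) : cc z = z 0 + z 1 * Complex.I := rfl

lemma cc_re (z : R2) : (cc z).re = z 0 := by simp [cc_apply]

lemma cc_im (z : R2) : (cc z).im = z 1 := by simp [cc_apply]

/-- The basis vectors of `ℝ²`. -/
def ee (j : Fin 2) : R2 := EuclideanSpace.single j 1

/-- The basis vectors of `ℝ²` as complex numbers. -/
def eC (j : Fin 2) : ℂ := cc (ee j)

lemma eC_zero : eC 0 = 1 := by
  apply Complex.ext <;> simp [eC, cc_re, cc_im, ee]

lemma eC_one : eC 1 = Complex.I := by
  apply Complex.ext <;> simp [eC, cc_re, cc_im, ee]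

lemma norm_ee (j : Fin 2) : ‖ee j‖ = 1 := by simp [ee]

lemma norm_eC (j : Fin 2) : ‖eC j‖ = 1 := by
  rw [eC, LinearIsometryEquiv.norm_map, norm_ee]

/-- Complex form of the weak gradient relation. -/
def CW (Ω : Set R2) (v : R2 → ℂ) (V : Fin 2 → R2 → ℂ) : Prop :=
  ∀ φ : R2 → ℝ, ContDiff ℝ (⊤ : ℕ∞) φ → HasCompactSupport φ → tsupport φ ⊆ Ω →
    ∀ j : Fin 2,
      (∫ z in Ω, ((fderiv ℝ φ z (ee j) : ℝ) : ℂ) * v z) = - ∫ z in Ω, (φ z : ℂ) * V j z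

/-- Continuous compactly supported functions times bounded. -/
lemma cs_mul_bdd {Ω : Set R2} {f v : R2 → ℂ} (hf : Continuous f) (hfc : HasCompactSupport f)
    (hv : AEStronglyMeasurable v (volume.restrict Ω))
    (hv1 : ∀ᵐ z ∂(volume.restrict Ω), ‖v z‖ = 1) :
    IntegrableOn (fun z => f z * v z) Ω := by
  have h := (hf.integrable_of_hasCompactSupport hfc (μ := (volume : Measure R2))).integrableOn
    (s := Ω)
  exact h.mul_bdd (c := 1) hv (hv1.mono fun z hz => hz.le)

lemma cs_mul_int {Ω : Set R2} {f V : R2 → ℂ} (hf : Continuous f) (hfc : HasCompactSupport f)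
    (hV : IntegrableOn V Ω) :
    IntegrableOn (fun z => f z * V z) Ω := by
  obtain ⟨C, hC⟩ := hfc.exists_bound_of_continuous hf
  exact hV.bdd_mul (c := C) hf.aestronglyMeasurable (Eventually.of_forall hC)

/-- `CW` extends to complex-valued test functions. -/
lemma CW.complex_test {Ω : Set R2} {v : R2 → ℂ} {V : Fin 2 → R2 → ℂ} (h : CW Ω v V)
    (hv : AEStronglyMeasurable v (volume.restrict Ω))
    (hv1 : ∀ᵐ z ∂(volume.restrict Ω), ‖v z‖ = 1)
    (hV : ∀ j, IntegrableOn (V j) Ω) (f : R2 → ℂ) (hf : ContDiff ℝ (⊤ : ℕ∞) f)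
    (hfc : HasCompactSupport f) (hfs : tsupport f ⊆ Ω) (j : Fin 2) :
    (∫ z in Ω, fderiv ℝ f z (ee j) * v z) = - ∫ z in Ω, f z * V j z := by
  have hre : ContDiff ℝ (⊤ : ℕ∞) (fun z => (f z).re) := Complex.reCLM.contDiff.comp hf
  have him : ContDiff ℝ (⊤ : ℕ∞) (fun z => (f z).im) := Complex.imCLM.contDiff.comp hf
  have cre : HasCompactSupport (fun z => (f z).re) := hfc.comp_left (g := Complex.re) rfl
  have cim : HasCompactSupport (fun z => (f z).im) := hfc.comp_left (g := Complex.im) rfl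
  have sre : tsupport (fun z => (f z).re) ⊆ Ω :=
    (tsupport_comp_subset (g := Complex.re) rfl f).trans hfs
  have sim : tsupport (fun z => (f z).im) ⊆ Ω :=
    (tsupport_comp_subset (g := Complex.im) rfl f).trans hfs
  have dre : ∀ z, fderiv ℝ (fun z => (f z).re) z (ee j) = (fderiv ℝ f z (ee j)).re := by
    intro z
    have := (Complex.reCLM.hasFDerivAt (x := f z)).comp z
      (hf.differentiable (by simp) z).hasFDerivAt
    have h2 : fderiv ℝ (fun z => (f z).re) z = _ := this.fderiv
    rw [h2]; rfl
  have dim' : ∀ z, fderiv ℝ (fun z => (f z).im) z (ee j) = (fderiv ℝ f z (ee j)).im := by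
    intro z
    have := (Complex.imCLM.hasFDerivAt (x := f z)).comp z
      (hf.differentiable (by simp) z).hasFDerivAt
    have h2 : fderiv ℝ (fun z => (f z).im) z = _ := this.fderiv
    rw [h2]; rfl
  have e1 := h _ hre cre sre j
  have e2 := h _ him cim sim j
  have cont : ∀ g : R2 → ℝ, ContDiff ℝ (⊤ : ℕ∞) g →
      Continuous (fun z => ((fderiv ℝ g z (ee j) : ℝ) : ℂ)) := fun g hg =>
    Complex.continuous_ofReal.comp ((hg.continuous_fderiv (by simp)).clm_apply continuous_const)
  have csd : ∀ g : R2 → ℝ, HasCompactSupport g →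
      HasCompactSupport (fun z => ((fderiv ℝ g z (ee j) : ℝ) : ℂ)) := fun g hg =>
    (hg.fderiv_apply (𝕜 := ℝ) (ee j)).comp_left (g := Complex.ofReal) rfl
  have i1 := cs_mul_bdd (cont _ hre) (csd _ cre) hv hv1
  have i2 := cs_mul_bdd (cont _ him) (csd _ cim) hv hv1
  have i3 : IntegrableOn (fun z => (((f z).re : ℝ) : ℂ) * V j z) Ω :=
    cs_mul_int (Complex.continuous_ofReal.comp hre.continuous)
      (cre.comp_left (g := Complex.ofReal) rfl) (hV j)
  have i4 : IntegrableOn (fun z => (((f z).im : ℝ) : ℂ) * V j z) Ω :=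
    cs_mul_int (Complex.continuous_ofReal.comp him.continuous)
      (cim.comp_left (g := Complex.ofReal) rfl) (hV j)
  have L : (∫ z in Ω, fderiv ℝ f z (ee j) * v z) =
      (∫ z in Ω, ((fderiv ℝ (fun z => (f z).re) z (ee j) : ℝ) : ℂ) * v z) +
      (∫ z in Ω, ((fderiv ℝ (fun z => (f z).im) z (ee j) : ℝ) : ℂ) * v z) * Complex.I := by
    rw [← integral_mul_const, ← integral_add i1 (i2.mul_const _)]
    congr 1; ext z
    rw [dre, dim']
    conv_lhs => rw [← Complex.re_add_im (fderiv ℝ f z (ee j))]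
    ring
  have R : (∫ z in Ω, f z * V j z) =
      (∫ z in Ω, (((f z).re : ℝ) : ℂ) * V j z) +
      (∫ z in Ω, (((f z).im : ℝ) : ℂ) * V j z) * Complex.I := by
    rw [← integral_mul_const, ← integral_add i3 (i4.mul_const _)]
    congr 1; ext z
    conv_lhs => rw [← Complex.re_add_im (f z)]
    ring
  rw [L, R, e1, e2]; ring

/-- Product rule with a smooth factor. -/
lemma CW.smooth_mul {Ω : Set R2} {v : R2 → ℂ} {V : Fin 2 → R2 → ℂ} (h : CW Ω v V)
    (hv : AEStronglyMeasurable v (volume.restrict Ω))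
    (hv1 : ∀ᵐ z ∂(volume.restrict Ω), ‖v z‖ = 1)
    (hV : ∀ j, IntegrableOn (V j) Ω) (w : R2 → ℂ) (hw : ContDiff ℝ (⊤ : ℕ∞) w) :
    CW Ω (fun z => w z * v z) (fun j z => w z * V j z + fderiv ℝ w z (ee j) * v z) := by
  intro φ hφ hφc hφs j
  have hφ' : ContDiff ℝ (⊤ : ℕ∞) (fun z => (φ z : ℂ)) := Complex.ofRealCLM.contDiff.comp hφ
  have hf : ContDiff ℝ (⊤ : ℕ∞) (fun z => (φ z : ℂ) * w z) := hφ'.mul hw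
  have hφc' : HasCompactSupport (fun z => (φ z : ℂ)) := hφc.comp_left (g := Complex.ofReal) rfl
  have hfc : HasCompactSupport (fun z => (φ z : ℂ) * w z) := hφc'.mul_right
  have hfs : tsupport (fun z => (φ z : ℂ) * w z) ⊆ Ω :=
    (closure_mono ((Function.support_mul_subset_left _ _).trans
      (Function.support_comp_subset (g := Complex.ofReal) rfl φ))).trans hφs
  have key := h.complex_test hv hv1 hV _ hf hfc hfs j
  have dφ : ∀ z, fderiv ℝ (fun z => (φ z : ℂ) * w z) z (ee j) =
      (φ z : ℂ) * fderiv ℝ w z (ee j) + w z * ((fderiv ℝ φ z (ee j) : ℝ) : ℂ) := by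
    intro z
    have h1 : HasFDerivAt (fun z => (φ z : ℂ)) (Complex.ofRealCLM.comp (fderiv ℝ φ z)) z :=
      (Complex.ofRealCLM.hasFDerivAt (x := φ z)).comp z
        (hφ.differentiable (by simp) z).hasFDerivAt
    have h2 := (hw.differentiable (by simp) z).hasFDerivAt
    have h3 : fderiv ℝ (fun z => (φ z : ℂ) * w z) z = _ := (h1.mul h2).fderiv
    rw [h3]
    simp
  have dwc : Continuous (fun z => fderiv ℝ w z (ee j)) :=
    (hw.continuous_fderiv (by simp)).clm_apply continuous_const
  have dφc : Continuous (fun z => ((fderiv ℝ φ z (ee j) : ℝ) : ℂ)) :=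
    Complex.continuous_ofReal.comp ((hφ.continuous_fderiv (by simp)).clm_apply continuous_const)
  have dφs : HasCompactSupport (fun z => ((fderiv ℝ φ z (ee j) : ℝ) : ℂ)) :=
    (hφc.fderiv_apply (𝕜 := ℝ) (ee j)).comp_left (g := Complex.ofReal) rfl
  have i1 : IntegrableOn (fun z => ((φ z : ℂ) * fderiv ℝ w z (ee j)) * v z) Ω :=
    cs_mul_bdd (hφ'.continuous.mul dwc) hφc'.mul_right hv hv1
  have i2 : IntegrableOn (fun z => (((fderiv ℝ φ z (ee j) : ℝ) : ℂ) * w z) * v z) Ω :=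
    cs_mul_bdd (dφc.mul hw.continuous) dφs.mul_right hv hv1
  have i3 : IntegrableOn (fun z => ((φ z : ℂ) * w z) * V j z) Ω :=
    cs_mul_int hf.continuous hfc (hV j)
  have L : (∫ z in Ω, fderiv ℝ (fun z => (φ z : ℂ) * w z) z (ee j) * v z) =
      (∫ z in Ω, ((φ z : ℂ) * fderiv ℝ w z (ee j)) * v z) +
      ∫ z in Ω, (((fderiv ℝ φ z (ee j) : ℝ) : ℂ) * w z) * v z := by
    rw [← integral_add i1 i2]
    congr 1; ext z; rw [dφ]; ring
  have R : (∫ z in Ω, (φ z : ℂ) * (w z * V j z + fderiv ℝ w z (ee j) * v z)) =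
      (∫ z in Ω, ((φ z : ℂ) * w z) * V j z) +
      (∫ z in Ω, ((φ z : ℂ) * fderiv ℝ w z (ee j)) * v z) := by
    rw [← integral_add i3 i1]
    congr 1; ext z; ring
  have L2 : (∫ z in Ω, ((fderiv ℝ φ z (ee j) : ℝ) : ℂ) * (w z * v z)) =
      ∫ z in Ω, (((fderiv ℝ φ z (ee j) : ℝ) : ℂ) * w z) * v z := by
    congr 1; ext z; ring
  rw [L] at key
  rw [R, L2]
  linear_combination key

/-- Dominated limits of weak gradients. -/
lemma CW.of_tendsto {Ω : Set R2} {v : R2 → ℂ} {V : Fin 2 → R2 → ℂ}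
    (vn : ℕ → R2 → ℂ) (Vn : ℕ → Fin 2 → R2 → ℂ)
    (h : ∀ n, CW Ω (vn n) (Vn n))
    (hvm : ∀ n, AEStronglyMeasurable (vn n) (volume.restrict Ω))
    (hVm : ∀ n j, AEStronglyMeasurable (Vn n j) (volume.restrict Ω))
    (hv1 : ∀ n, ∀ᵐ z ∂(volume.restrict Ω), ‖vn n z‖ ≤ 1)
    (g : Fin 2 → R2 → ℝ) (hg : ∀ j, IntegrableOn (g j) Ω)
    (hV1 : ∀ n j, ∀ᵐ z ∂(volume.restrict Ω), ‖Vn n j z‖ ≤ g j z)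
    (hvl : ∀ᵐ z ∂(volume.restrict Ω), Tendsto (fun n => vn n z) atTop (𝓝 (v z)))
    (hVl : ∀ j, ∀ᵐ z ∂(volume.restrict Ω), Tendsto (fun n => Vn n j z) atTop (𝓝 (V j z))) :
    CW Ω v V := by
  intro φ hφ hφc hφs j
  have dφc : Continuous (fun z => ((fderiv ℝ φ z (ee j) : ℝ) : ℂ)) :=
    Complex.continuous_ofReal.comp ((hφ.continuous_fderiv (by simp)).clm_apply continuous_const)
  have dφs : HasCompactSupport (fun z => ((fderiv ℝ φ z (ee j) : ℝ) : ℂ)) :=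
    (hφc.fderiv_apply (𝕜 := ℝ) (ee j)).comp_left (g := Complex.ofReal) rfl
  have cφ : Continuous (fun z => (φ z : ℂ)) := Complex.continuous_ofReal.comp hφ.continuous
  have t1 : Tendsto (fun n => ∫ z in Ω, ((fderiv ℝ φ z (ee j) : ℝ) : ℂ) * vn n z) atTop
      (𝓝 (∫ z in Ω, ((fderiv ℝ φ z (ee j) : ℝ) : ℂ) * v z)) := by
    apply tendsto_integral_of_dominated_convergence
      (fun z => ‖((fderiv ℝ φ z (ee j) : ℝ) : ℂ)‖)
    · intro n; exact dφc.aestronglyMeasurable.mul (hvm n)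
    · exact (dφc.integrable_of_hasCompactSupport dφs).norm.integrableOn
    · intro n
      filter_upwards [hv1 n] with z hz
      rw [norm_mul]
      exact mul_le_of_le_one_right (norm_nonneg _) hz
    · filter_upwards [hvl] with z hz
      exact hz.const_mul _
  obtain ⟨C, hC⟩ := (hφc.comp_left (g := Complex.ofReal) rfl).exists_bound_of_continuous cφ
  have t2 : Tendsto (fun n => ∫ z in Ω, (φ z : ℂ) * Vn n j z) atTop
      (𝓝 (∫ z in Ω, (φ z : ℂ) * V j z)) := by
    apply tendsto_integral_of_dominated_convergence (fun z => C * g j z)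
    · intro n; exact cφ.aestronglyMeasurable.mul (hVm n j)
    · exact (hg j).const_mul C
    · intro n
      filter_upwards [hV1 n j] with z hz
      rw [norm_mul]
      exact mul_le_mul (hC z) hz (norm_nonneg _) ((norm_nonneg _).trans (hC z))
    · filter_upwards [hVl j] with z hz
      exact hz.const_mul _
  refine tendsto_nhds_unique t1 (t2.neg.congr fun n => ?_)
  exact (h n φ hφ hφc hφs j).symm

/-! ### Unimodular multipliers -/

/-- `w` is a unimodular Sobolev multiplier on `Ω` with phase gradient `a`. -/
structure IsMult (Ω : Set R2) (w : R2 → ℂ) (a : Fin 2 → R2 → ℝ) : Prop where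
  meas : AEStronglyMeasurable w (volume.restrict Ω)
  norm : ∀ᵐ z ∂(volume.restrict Ω), ‖w z‖ = 1
  int : ∀ j, IntegrableOn (a j) Ω
  rule : ∀ (v : R2 → ℂ) (V : Fin 2 → R2 → ℂ), AEStronglyMeasurable v (volume.restrict Ω) →
    (∀ᵐ z ∂(volume.restrict Ω), ‖v z‖ = 1) → (∀ j, IntegrableOn (V j) Ω) → CW Ω v V →
    CW Ω (fun z => w z * v z) (fun j z => w z * (V j z + Complex.I * (a j z : ℂ) * v z))

lemma IsMult.integrable {Ω : Set R2} {w : R2 → ℂ} {a : Fin 2 → R2 → ℝ} (h : IsMult Ω w a)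
    {v : R2 → ℂ} {V : Fin 2 → R2 → ℂ} (hv : AEStronglyMeasurable v (volume.restrict Ω))
    (hv1 : ∀ᵐ z ∂(volume.restrict Ω), ‖v z‖ = 1) (hV : ∀ j, IntegrableOn (V j) Ω) (j : Fin 2) :
    IntegrableOn (fun z => w z * (V j z + Complex.I * (a j z : ℂ) * v z)) Ω := by
  have h1 : IntegrableOn (fun z => Complex.I * (a j z : ℂ)) Ω :=
    Integrable.const_mul (h.int j).ofReal _
  have h2 : IntegrableOn (fun z => Complex.I * (a j z : ℂ) * v z) Ω :=
    h1.mul_bdd (c := 1) hv (hv1.mono fun z hz => hz.le)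
  have h3 : IntegrableOn (fun z => V j z + Complex.I * (a j z : ℂ) * v z) Ω := (hV j).add h2
  exact h3.bdd_mul (c := 1) h.meas (h.norm.mono fun z hz => hz.le)

lemma IsMult.mul_norm {Ω : Set R2} {w : R2 → ℂ} {a : Fin 2 → R2 → ℝ} (h : IsMult Ω w a)
    {v : R2 → ℂ} (hv1 : ∀ᵐ z ∂(volume.restrict Ω), ‖v z‖ = 1) :
    ∀ᵐ z ∂(volume.restrict Ω), ‖w z * v z‖ = 1 := by
  filter_upwards [h.norm, hv1] with z h1 h2
  rw [norm_mul, h1, h2, one_mul]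

lemma IsMult.mul {Ω : Set R2} {w₁ w₂ : R2 → ℂ} {a₁ a₂ : Fin 2 → R2 → ℝ}
    (h₁ : IsMult Ω w₁ a₁) (h₂ : IsMult Ω w₂ a₂) :
    IsMult Ω (fun z => w₁ z * w₂ z) (fun j z => a₁ j z + a₂ j z) where
  meas := h₁.meas.mul h₂.meas
  norm := h₁.mul_norm h₂.norm
  int j := (h₁.int j).add (h₂.int j)
  rule v V hv hv1 hV h := by
    have := h₁.rule _ _ (h₂.meas.mul hv) (h₂.mul_norm hv1) (h₂.integrable hv hv1 hV)
      (h₂.rule v V hv hv1 hV h)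
    convert this using 1
    · ext z; simp only [Pi.mul_apply]; ring
    · ext j z; simp only [Pi.mul_apply]; push_cast; ring

lemma IsMult.one (Ω : Set R2) : IsMult Ω (fun _ => 1) (fun _ _ => 0) where
  meas := aestronglyMeasurable_const
  norm := by simp
  int j := integrableOn_zero
  rule v V hv hv1 hV h := by simpa using h

lemma IsMult.prod {Ω : Set R2} {w : ℕ → R2 → ℂ} {a : ℕ → Fin 2 → R2 → ℝ}
    (h : ∀ i, IsMult Ω (w i) (a i)) (n : ℕ) :
    IsMult Ω (fun z => ∏ i ∈ Finset.range n, w i z)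
      (fun j z => ∑ i ∈ Finset.range n, a i j z) := by
  induction n with
  | zero => simpa using IsMult.one Ω
  | succ n ih =>
    simp only [Finset.prod_range_succ, Finset.sum_range_succ]
    exact ih.mul (h n)

lemma CW.conj {Ω : Set R2} {v : R2 → ℂ} {V : Fin 2 → R2 → ℂ} (h : CW Ω v V) :
    CW Ω (fun z => starRingEnd ℂ (v z)) (fun j z => starRingEnd ℂ (V j z)) := by
  intro φ h1 h2 h3 j
  have e := congrArg (starRingEnd ℂ) (h φ h1 h2 h3 j)
  rw [map_neg, ← integral_conj, ← integral_conj] at e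
  simpa using e

lemma integrable_conj {Ω : Set R2} {V : R2 → ℂ} (h : IntegrableOn V Ω) :
    IntegrableOn (fun z => starRingEnd ℂ (V z)) Ω :=
  Complex.conjLIE.toContinuousLinearEquiv.toContinuousLinearMap.integrable_comp h

lemma IsMult.conj {Ω : Set R2} {w : R2 → ℂ} {a : Fin 2 → R2 → ℝ} (h : IsMult Ω w a) :
    IsMult Ω (fun z => starRingEnd ℂ (w z)) (fun j z => - a j z) where
  meas := Complex.continuous_conj.comp_aestronglyMeasurable h.meas
  norm := by simpa using h.norm
  int j := (h.int j).neg
  rule v V hv hv1 hV hh := by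
    have := (h.rule _ _ (Complex.continuous_conj.comp_aestronglyMeasurable hv)
      (by simpa using hv1) (fun j => integrable_conj (hV j)) hh.conj).conj
    convert this using 1
    · ext z; simp
    · ext j z; simp

lemma IsMult.of_tendsto {Ω : Set R2} {w : ℕ → R2 → ℂ} {a : ℕ → Fin 2 → R2 → ℝ}
    {W : R2 → ℂ} {A : Fin 2 → R2 → ℝ}
    (h : ∀ i, IsMult Ω (w i) (a i)) (g : Fin 2 → R2 → ℝ) (hg : ∀ j, IntegrableOn (g j) Ω)
    (hbd : ∀ n j, ∀ᵐ z ∂(volume.restrict Ω), |a n j z| ≤ g j z)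
    (hW : ∀ᵐ z ∂(volume.restrict Ω), Tendsto (fun n => w n z) atTop (𝓝 (W z)))
    (hA : ∀ j, ∀ᵐ z ∂(volume.restrict Ω), Tendsto (fun n => a n j z) atTop (𝓝 (A j z))) :
    IsMult Ω W A where
  meas := aestronglyMeasurable_of_tendsto_ae atTop (fun n => (h n).meas) hW
  norm := by
    filter_upwards [hW, ae_all_iff.2 fun n => (h n).norm] with z h1 h2
    refine tendsto_nhds_unique h1.norm ?_
    simp [h2]
  int j := by
    refine (hg j).mono' (aestronglyMeasurable_of_tendsto_ae atTop
      (fun n => ((h n).int j).aestronglyMeasurable) (hA j)) ?_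
    filter_upwards [hA j, ae_all_iff.2 fun n => hbd n j] with z h1 h2
    exact le_of_tendsto h1.norm (Eventually.of_forall h2)
  rule v V hv hv1 hV hh := by
    refine CW.of_tendsto _ _ (fun n => (h n).rule v V hv hv1 hV hh)
      (fun n => (h n).meas.mul hv)
      (fun n j => ((h n).integrable hv hv1 hV j).aestronglyMeasurable)
      (fun n => ((h n).mul_norm hv1).mono fun z hz => hz.le)
      (fun j z => ‖V j z‖ + g j z) (fun j => (hV j).norm.add (hg j)) ?_ ?_ ?_
    · intro n j
      filter_upwards [(h n).norm, hv1, hbd n j] with z h1 h2 h3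
      rw [norm_mul, h1, one_mul]
      refine (norm_add_le _ _).trans ?_
      gcongr
      rw [norm_mul, norm_mul, h2]
      simpa using h3
    · filter_upwards [hW] with z hz
      exact hz.mul_const _
    · intro j
      filter_upwards [hW, hA j] with z hz h2
      refine hz.mul (tendsto_const_nhds.add (Tendsto.mul_const _ (Tendsto.const_mul _ ?_)))
      exact (Complex.continuous_ofReal.tendsto _).comp h2

/-- Smooth phases are multipliers. -/
lemma IsMult.smooth {Ω : Set R2} (hb : Bornology.IsBounded Ω) {η : R2 → ℝ}
    (hη : ContDiff ℝ (⊤ : ℕ∞) η) :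
    IsMult Ω (fun z => Complex.exp ((η z : ℂ) * Complex.I))
      (fun j z => fderiv ℝ η z (ee j)) where
  meas := (by have := hη.continuous; fun_prop : Continuous _).aestronglyMeasurable
  norm := by
    filter_upwards with z
    exact Complex.norm_exp_ofReal_mul_I _
  int j := by
    have hc : Continuous fun z => fderiv ℝ η z (ee j) :=
      (hη.continuous_fderiv (by simp)).clm_apply continuous_const
    exact (hc.continuousOn.integrableOn_compact hb.isCompact_closure).mono_set subset_closure
  rule v V hv hv1 hV hh := by
    have hη' : ContDiff ℝ (⊤ : ℕ∞) (fun z => (η z : ℂ) * Complex.I) :=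
      (Complex.ofRealCLM.contDiff.comp hη).mul contDiff_const
    have := hh.smooth_mul hv hv1 hV _ hη'.cexp
    convert this using 1
    ext j z
    have h1 : HasFDerivAt (fun z => (η z : ℂ)) (Complex.ofRealCLM.comp (fderiv ℝ η z)) z :=
      (Complex.ofRealCLM.hasFDerivAt (x := η z)).comp z
        (hη.differentiable (by simp) z).hasFDerivAt
    rw [(h1.mul_const Complex.I).cexp.fderiv]
    simp
    ring

/-! ### Radial integrals in the plane -/

lemma finrank_R2 : Module.finrank ℝ R2 = 2 := by simp

lemma vol_ball_R2 : (volume : Measure R2).real (ball 0 1) = Real.pi := by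
  rw [Measure.real, EuclideanSpace.volume_ball_fin_two]
  simp [Real.pi_nonneg]

lemma inv_norm_integrable_aux {R : ℝ} (hR : 0 < R) :
    Integrable (fun z : R2 => (Iio R).indicator (fun r => r⁻¹) ‖z‖) ∧
      ∫ z : R2, (Iio R).indicator (fun r => r⁻¹) ‖z‖ = 2 * Real.pi * R := by
  have e : ∀ r ∈ Ioi (0 : ℝ), r ^ (Module.finrank ℝ R2 - 1) • (Iio R).indicator (fun r => r⁻¹) r
      = (Iio R).indicator (fun _ => (1 : ℝ)) r := by
    intro r hr
    have hr' : r ≠ 0 := (mem_Ioi.1 hr).ne'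
    by_cases h : r < R
    · simp [h, hr']
    · simp [h]
  constructor
  · rw [integrable_fun_norm_addHaar, integrableOn_congr_fun e measurableSet_Ioi,
      IntegrableOn, integrable_indicator_iff measurableSet_Iio, IntegrableOn,
      Measure.restrict_restrict measurableSet_Iio]
    have : Iio R ∩ Ioi 0 = Ioo 0 R := by ext; simp [and_comm]
    rw [this, ← IntegrableOn]
    exact integrableOn_const (by simp)
  · rw [integral_fun_norm_addHaar, setIntegral_congr_fun measurableSet_Ioi e, vol_ball_R2,
      integral_indicator measurableSet_Iio, Measure.restrict_restrict measurableSet_Iio]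
    have : Iio R ∩ Ioi 0 = Ioo 0 R := by ext; simp [and_comm]
    rw [this]
    simp [hR.le]
    ring

lemma inv_norm_integrableOn (p : R2) {R : ℝ} (hR : 0 < R) :
    IntegrableOn (fun z : R2 => ‖z - p‖⁻¹) (ball p R) ∧
      ∫ z in ball p R, ‖z - p‖⁻¹ = 2 * Real.pi * R := by
  obtain ⟨h1, h2⟩ := inv_norm_integrable_aux hR
  have e : (fun z : R2 => (Iio R).indicator (fun r => r⁻¹) ‖z - p‖) =
      (ball p R).indicator (fun z => ‖z - p‖⁻¹) := by
    ext z
    by_cases h : ‖z - p‖ < R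
    · simp [h, dist_eq_norm]
    · simp [h, dist_eq_norm]
  constructor
  · rw [← integrable_indicator_iff measurableSet_ball, ← e]
    exact h1.comp_sub_right p
  · rw [← integral_indicator measurableSet_ball, ← e, ← h2]
    exact integral_sub_right_eq_self (fun z : R2 => (Iio R).indicator (fun r => r⁻¹) ‖z‖) p

lemma inv_norm_integrableOn_bounded (p : R2) {Ω : Set R2} (hb : Bornology.IsBounded Ω) :
    IntegrableOn (fun z : R2 => ‖z - p‖⁻¹) Ω := by
  obtain ⟨R, hR, h⟩ := hb.subset_ball_lt 0 p
  exact (inv_norm_integrableOn p hR).1.mono_set h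

/-- `∫ 2/(1+|z|²)² = 2π`. -/
lemma peak_integral : Integrable (fun z : R2 => 2 / (1 + ‖z‖ ^ 2) ^ 2) ∧
    ∫ z : R2, 2 / (1 + ‖z‖ ^ 2) ^ 2 = 2 * Real.pi := by
  have hd : ∀ r ∈ Ici (0 : ℝ), HasDerivAt (fun r : ℝ => - (1 + r ^ 2)⁻¹)
      (r ^ (Module.finrank ℝ R2 - 1) • (2 / (1 + r ^ 2) ^ 2)) r := by
    intro r _
    have h0 : (1 + r ^ 2) ≠ 0 := by positivity
    have := (((hasDerivAt_id r).pow 2).const_add 1).inv (by simpa using h0)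
    have this2 : HasDerivAt (fun r : ℝ => - (1 + r ^ 2)⁻¹) _ r := this.neg
    refine this2.congr_deriv ?_
    simp
    ring
  have hl : Tendsto (fun r : ℝ => - (1 + r ^ 2)⁻¹) atTop (𝓝 0) := by
    rw [← neg_zero]
    refine Tendsto.neg (tendsto_inv_atTop_zero.comp ?_)
    exact tendsto_atTop_add_const_left _ _ (tendsto_pow_atTop (by norm_num))
  have hpos : ∀ r ∈ Ioi (0 : ℝ), 0 ≤ r ^ (Module.finrank ℝ R2 - 1) • (2 / (1 + r ^ 2) ^ 2) := by
    intro r hr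
    have : 0 < r := hr
    simp only [smul_eq_mul]
    positivity
  constructor
  · rw [integrable_fun_norm_addHaar (E := R2) volume (f := fun r : ℝ => 2 / (1 + r ^ 2) ^ 2)]
    exact integrableOn_Ioi_deriv_of_nonneg' hd hpos hl
  · rw [integral_fun_norm_addHaar (E := R2) volume (fun r : ℝ => 2 / (1 + r ^ 2) ^ 2),
      integral_Ioi_of_hasDerivAt_of_nonneg' hd hpos hl, vol_ball_R2]
    simp

/-! ### The vortex -/

/-- The phase of a complex number. -/
def phase (q : ℂ) : ℂ := if q = 0 then 1 else (‖q‖⁻¹ : ℝ) * q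

/-- Gradient of the argument of `z - p`. -/
def vort (p : R2) (j : Fin 2) (z : R2) : ℝ := (eC j / (cc z - cc p)).im

lemma norm_phase (q : ℂ) : ‖phase q‖ = 1 := by
  unfold phase
  split_ifs with h
  · simp
  · simp [h]

lemma measurable_phase : Measurable phase := by
  unfold phase
  refine Measurable.ite (measurableSet_singleton 0) measurable_const ?_
  fun_prop

lemma norm_cc_sub (z p : R2) : ‖cc z - cc p‖ = ‖z - p‖ := by
  rw [← map_sub, LinearIsometryEquiv.norm_map]

lemma abs_vort_le (p : R2) (j : Fin 2) (z : R2) : |vort p j z| ≤ ‖z - p‖⁻¹ := by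
  refine (Complex.abs_im_le_norm _).trans ?_
  rw [norm_div, norm_eC, norm_cc_sub, one_div]

lemma continuous_cc : Continuous cc := cc.continuous

lemma measurable_vort (p : R2) (j : Fin 2) : Measurable (vort p j) := by
  unfold vort
  have : Measurable cc := continuous_cc.measurable
  exact Complex.measurable_im.comp (measurable_const.div (this.sub measurable_const))

lemma vort_integrableOn (p : R2) (j : Fin 2) {Ω : Set R2} (hb : Bornology.IsBounded Ω) :
    IntegrableOn (vort p j) Ω :=
  (inv_norm_integrableOn_bounded p hb).mono' (measurable_vort p j).aestronglyMeasurable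
    (Eventually.of_forall fun z => abs_vort_le p j z)

/-- Regularized norm. -/
def rs (p : R2) (δ : ℝ) (z : R2) : ℝ := Real.sqrt (‖z - p‖ ^ 2 + δ ^ 2)

lemma hasFDerivAt_normsq (p z : R2) :
    ∃ D : R2 →L[ℝ] ℝ, HasFDerivAt (fun z : R2 => ‖z - p‖ ^ 2) D z ∧
      ∀ j, D (ee j) = 2 * (z - p) j := by
  refine ⟨_, ((hasFDerivAt_id z).sub_const p).norm_sq, fun j => ?_⟩
  simp [ee, EuclideanSpace.inner_single_right]

/-- Regularized vortex. -/
def regv (p : R2) (δ : ℝ) (z : R2) : ℂ := ((rs p δ z)⁻¹ : ℝ) * (cc z - cc p)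

lemma rs_pos (p : R2) {δ : ℝ} (hδ : 0 < δ) (z : R2) : 0 < rs p δ z :=
  Real.sqrt_pos.2 (by positivity)

lemma rs_ge (p : R2) (δ : ℝ) (z : R2) : ‖z - p‖ ≤ rs p δ z :=
  Real.le_sqrt_of_sq_le (by nlinarith [sq_nonneg δ])

lemma contDiff_regv (p : R2) {δ : ℝ} (hδ : 0 < δ) : ContDiff ℝ (⊤ : ℕ∞) (regv p δ) := by
  have h1 : ContDiff ℝ (⊤ : ℕ∞) (fun z : R2 => ‖z - p‖ ^ 2 + δ ^ 2) :=
    ((contDiff_id.sub contDiff_const).norm_sq ℝ).add contDiff_const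
  have h2 : ContDiff ℝ (⊤ : ℕ∞) (fun z => (rs p δ z)⁻¹) :=
    (h1.sqrt fun z => by positivity).inv fun z => (rs_pos p hδ z).ne'
  have h3 : ContDiff ℝ (⊤ : ℕ∞) (fun z : R2 => cc z - cc p) :=
    cc.contDiff.sub contDiff_const
  exact (Complex.ofRealCLM.contDiff.comp h2).mul h3

lemma fderiv_regv (p : R2) {δ : ℝ} (hδ : 0 < δ) (z : R2) (j : Fin 2) :
    fderiv ℝ (regv p δ) z (ee j) =
      ((rs p δ z)⁻¹ : ℝ) * eC j - (((z - p) j * (rs p δ z)⁻¹ ^ 3 : ℝ) : ℂ) * (cc z - cc p) := by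
  obtain ⟨D, hD, hDj⟩ := hasFDerivAt_normsq p z
  have hs := rs_pos p hδ z
  have h1 : HasFDerivAt (rs p δ) _ z := (hD.add_const (δ ^ 2)).sqrt (by positivity)
  have h2 : HasFDerivAt (fun z => (rs p δ z)⁻¹) _ z :=
    (hasDerivAt_inv hs.ne').comp_hasFDerivAt z h1
  have h3 : HasFDerivAt (fun z => (((rs p δ z)⁻¹ : ℝ) : ℂ)) _ z :=
    (Complex.ofRealCLM.hasFDerivAt (x := (rs p δ z)⁻¹)).comp z h2
  have h4 : HasFDerivAt (fun z : R2 => cc z - cc p)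
      (cc.toContinuousLinearEquiv : R2 →L[ℝ] ℂ) z :=
    (cc.toContinuousLinearEquiv.hasFDerivAt (x := z)).sub_const _
  have h5 : HasFDerivAt (regv p δ) _ z := h3.mul h4
  rw [h5.fderiv]
  have e : (√(‖z - p‖ ^ 2 + δ ^ 2)) = rs p δ z := rfl
  simp [hDj, e, eC]
  field_simp
  ring

lemma vortex_identity (q : ℂ) (hq : q ≠ 0) (j : Fin 2) :
    ((‖q‖⁻¹ : ℝ) : ℂ) * eC j -
      (((![q.re, q.im] : Fin 2 → ℝ) j * ‖q‖⁻¹ ^ 3 : ℝ) : ℂ) * q =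
      ((‖q‖⁻¹ : ℝ) * q) * (Complex.I * ((eC j / q).im : ℝ)) := by
  have hr : ‖q‖ ≠ 0 := norm_ne_zero_iff.2 hq
  have hn : q.re ^ 2 + q.im ^ 2 = ‖q‖ ^ 2 := by
    rw [Complex.sq_norm, Complex.normSq_apply]; ring
  have hn' : Complex.normSq q = ‖q‖ ^ 2 := Complex.normSq_eq_norm_sq q
  have him : (eC j / q).im = (![-q.im, q.re] : Fin 2 → ℝ) j / ‖q‖ ^ 2 := by
    fin_cases j
    · simp [eC_zero, Complex.inv_im, hn']
    · simp [eC_one, Complex.div_im, hn']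
  rw [him]
  generalize ‖q‖ = r at *
  generalize hs : (![-q.im, q.re] : Fin 2 → ℝ) j / r ^ 2 = s
  generalize ht : (![q.re, q.im] : Fin 2 → ℝ) j * r⁻¹ ^ 3 = t
  fin_cases j
  · simp only [Fin.zero_eta, Matrix.cons_val_zero] at hs ht
    apply Complex.ext
    · simp only [Fin.zero_eta, eC_zero, Complex.sub_re, Complex.mul_re, Complex.mul_im,
        Complex.ofReal_re, Complex.ofReal_im, Complex.I_re, Complex.I_im, Complex.one_re,
        Complex.one_im]
      subst hs ht
      field_simp
      linear_combination - hn
    · simp only [Fin.zero_eta, eC_zero, Complex.sub_im, Complex.mul_re, Complex.mul_im,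
        Complex.ofReal_re, Complex.ofReal_im, Complex.I_re, Complex.I_im, Complex.one_re,
        Complex.one_im]
      subst hs ht
      field_simp
      ring
  · simp only [Fin.mk_one, Matrix.cons_val_one, Matrix.cons_val_fin_one] at hs ht
    apply Complex.ext
    · simp only [Fin.mk_one, eC_one, Complex.sub_re, Complex.mul_re, Complex.mul_im,
        Complex.ofReal_re, Complex.ofReal_im, Complex.I_re, Complex.I_im]
      subst hs ht
      field_simp
      ring
    · simp only [Fin.mk_one, eC_one, Complex.sub_im, Complex.mul_re, Complex.mul_im,
        Complex.ofReal_re, Complex.ofReal_im, Complex.I_re, Complex.I_im]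
      subst hs ht
      field_simp
      linear_combination - hn

lemma cc_sub_coord (z p : R2) (j : Fin 2) :
    (z - p) j = (![(cc z - cc p).re, (cc z - cc p).im] : Fin 2 → ℝ) j := by
  fin_cases j <;> simp [cc_re, cc_im]

lemma ae_ne_R2 (p : R2) {Ω : Set R2} : ∀ᵐ z ∂(volume.restrict Ω), z ≠ p := by
  have : ∀ᵐ z ∂(volume : Measure R2), z ≠ p := by
    rw [ae_iff]; simp
  exact ae_restrict_of_ae this

lemma rs_tendsto (p z : R2) {δ : ℕ → ℝ} (hδ : Tendsto δ atTop (𝓝 0)) :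
    Tendsto (fun n => rs p (δ n) z) atTop (𝓝 ‖z - p‖) := by
  have : Tendsto (fun n => ‖z - p‖ ^ 2 + δ n ^ 2) atTop (𝓝 (‖z - p‖ ^ 2 + 0 ^ 2)) :=
    tendsto_const_nhds.add (hδ.pow 2)
  have h := (Real.continuous_sqrt.tendsto _).comp this
  simpa [rs, Function.comp_def] using h

lemma isMult_vortex {Ω : Set R2} (hb : Bornology.IsBounded Ω) (p : R2) :
    IsMult Ω (fun z => phase (cc z - cc p)) (vort p) where
  meas := (measurable_phase.comp
    (continuous_cc.measurable.sub measurable_const)).aestronglyMeasurable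
  norm := Eventually.of_forall fun z => norm_phase _
  int j := vort_integrableOn p j hb
  rule v V hv hv1 hV hh := by
    set δ : ℕ → ℝ := fun n => 1 / ((n : ℝ) + 1) with hδdef
    have hδ0 : ∀ n, 0 < δ n := fun n => Nat.one_div_pos_of_nat
    have hδ : Tendsto δ atTop (𝓝 0) := tendsto_one_div_add_atTop_nhds_zero_nat
    have nreg : ∀ n z, ‖regv p (δ n) z‖ ≤ 1 := by
      intro n z
      have h := rs_pos p (hδ0 n) z
      rw [regv, norm_mul, Complex.norm_real, norm_inv, Real.norm_of_nonneg h.le, norm_cc_sub,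
        inv_mul_le_iff₀ h, mul_one]
      exact rs_ge _ _ _
    have coord : ∀ (z : R2) (j : Fin 2), |z j| ≤ ‖z‖ := fun z j => by
      simpa using PiLp.norm_apply_le z j
    refine CW.of_tendsto (fun n z => regv p (δ n) z * v z) _
      (fun n => hh.smooth_mul hv hv1 hV _ (contDiff_regv p (hδ0 n)))
      (fun n => (contDiff_regv p (hδ0 n)).continuous.aestronglyMeasurable.mul hv)
      (fun n j => ?_) (fun n => ?_)
      (fun j z => ‖V j z‖ + 2 * ‖z - p‖⁻¹)
      (fun j => (hV j).norm.add ((inv_norm_integrableOn_bounded p hb).const_mul 2)) ?_ ?_ ?_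
    · have hc := (contDiff_regv p (hδ0 n))
      exact (hc.continuous.aestronglyMeasurable.mul (hV j).aestronglyMeasurable).add
        (((hc.continuous_fderiv (by simp)).clm_apply
          continuous_const).aestronglyMeasurable.mul hv)
    · filter_upwards [hv1] with z hz
      rw [norm_mul, hz, mul_one]
      exact nreg n z
    · intro n j
      filter_upwards [hv1, ae_ne_R2 p] with z hz hzp
      refine (norm_add_le _ _).trans (add_le_add ?_ ?_)
      · rw [norm_mul]
        exact mul_le_of_le_one_left (norm_nonneg _) (nreg n z)
      · rw [norm_mul, hz, mul_one, fderiv_regv p (hδ0 n)]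
        have hs := rs_pos p (hδ0 n) z
        have hr : 0 < ‖z - p‖ := norm_pos_iff.2 (sub_ne_zero.2 hzp)
        have hle := rs_ge p (δ n) z
        have hle' : (rs p (δ n) z)⁻¹ ≤ ‖z - p‖⁻¹ := inv_anti₀ hr hle
        have hone : (rs p (δ n) z)⁻¹ * ‖z - p‖ ≤ 1 := by
          rw [inv_mul_le_iff₀ hs, mul_one]; exact hle
        refine (norm_sub_le _ _).trans ?_
        rw [norm_mul, norm_mul, norm_eC, norm_cc_sub, Complex.norm_real, Complex.norm_real,
          norm_mul, norm_pow, Real.norm_of_nonneg (inv_nonneg.2 hs.le), Real.norm_eq_abs]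
        set b := (rs p (δ n) z)⁻¹
        have hb0 : 0 ≤ b := inv_nonneg.2 hs.le
        calc b * 1 + |(z - p) j| * b ^ 3 * ‖z - p‖
            ≤ b * 1 + ‖z - p‖ * b ^ 3 * ‖z - p‖ := by gcongr; exact coord _ _
          _ = b + b * (b * ‖z - p‖) ^ 2 := by ring
          _ ≤ b + b * 1 := by
              gcongr
              exact pow_le_one₀ (by positivity) hone
          _ ≤ 2 * ‖z - p‖⁻¹ := by linarith
    · filter_upwards [ae_ne_R2 p] with z hzp
      have hr : ‖z - p‖ ≠ 0 := norm_ne_zero_iff.2 (sub_ne_zero.2 hzp)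
      refine Tendsto.mul_const _ ?_
      have hq : cc z - cc p ≠ 0 := sub_ne_zero.2 fun h => hzp (cc.injective h)
      rw [phase, if_neg hq, norm_cc_sub]
      exact Tendsto.mul_const _
        ((Complex.continuous_ofReal.tendsto _).comp ((rs_tendsto p z hδ).inv₀ hr))
    · intro j
      filter_upwards [ae_ne_R2 p] with z hzp
      have hr : ‖z - p‖ ≠ 0 := norm_ne_zero_iff.2 (sub_ne_zero.2 hzp)
      have hq : cc z - cc p ≠ 0 := sub_ne_zero.2 fun h => hzp (cc.injective h)
      have hi := (rs_tendsto p z hδ).inv₀ hr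
      have t1 : Tendsto (fun n => (((rs p (δ n) z)⁻¹ : ℝ) : ℂ)) atTop
          (𝓝 ((‖z - p‖⁻¹ : ℝ) : ℂ)) := (Complex.continuous_ofReal.tendsto _).comp hi
      have t2 : Tendsto (fun n => (((z - p) j * (rs p (δ n) z)⁻¹ ^ 3 : ℝ) : ℂ)) atTop
          (𝓝 (((z - p) j * ‖z - p‖⁻¹ ^ 3 : ℝ) : ℂ)) :=
        (Complex.continuous_ofReal.tendsto _).comp ((hi.pow 3).const_mul _)
      have id1 := vortex_identity (cc z - cc p) hq j
      rw [← cc_sub_coord, norm_cc_sub] at id1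
      have goal_eq : phase (cc z - cc p) * (V j z + Complex.I * (vort p j z : ℂ) * v z) =
          ((‖z - p‖⁻¹ : ℝ) : ℂ) * (cc z - cc p) * V j z +
          (((‖z - p‖⁻¹ : ℝ) : ℂ) * eC j -
            (((z - p) j * ‖z - p‖⁻¹ ^ 3 : ℝ) : ℂ) * (cc z - cc p)) * v z := by
        rw [id1, phase, if_neg hq, norm_cc_sub, vort]; ring
      rw [goal_eq]
      simp_rw [fderiv_regv p (hδ0 _), regv]
      exact ((t1.mul_const _).mul_const _).add
        (((t1.mul_const _).sub (t2.mul_const _)).mul_const _)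

/-! ### Integration by parts against Lipschitz functions -/

lemma ibp {f g : R2 → ℝ} {D : ℝ≥0} (hf : ContDiff ℝ 1 f) (hg : LipschitzWith D g)
    (hgc : HasCompactSupport g) (j : Fin 2) :
    ∫ z, f z * fderiv ℝ g z (ee j) = - ∫ z, fderiv ℝ f z (ee j) * g z := by
  obtain ⟨R, hR, hsub⟩ := hgc.isCompact.isBounded.subset_ball_lt 0 (0 : R2)
  let χ : ContDiffBump (0 : R2) := ⟨R, R + 1, hR, by linarith⟩
  have hχ1 : ∀ z ∈ ball (0 : R2) R, χ z = 1 := fun z hz =>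
    χ.one_of_mem_closedBall (ball_subset_closedBall hz)
  have hF : ContDiff ℝ 1 (fun z => χ z * f z) := χ.contDiff.mul hf
  have hFc : HasCompactSupport (fun z => χ z * f z) := χ.hasCompactSupport.mul_right
  obtain ⟨C, hC⟩ := ContDiff.lipschitzWith_of_hasCompactSupport hFc hF one_ne_zero
  have key := LipschitzWith.integral_lineDeriv_mul_eq (μ := (volume : Measure R2)) hC hg hgc (ee j)
  have eF : ∀ z ∈ ball (0 : R2) R, fderiv ℝ (fun z => χ z * f z) z = fderiv ℝ f z := by
    intro z hz
    apply Filter.EventuallyEq.fderiv_eq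
    filter_upwards [isOpen_ball.mem_nhds hz] with y hy
    rw [hχ1 y hy, one_mul]
  have e1 : ∫ z, lineDeriv ℝ (fun z => χ z * f z) z (ee j) * g z =
      ∫ z, fderiv ℝ f z (ee j) * g z := by
    congr 1; ext z
    by_cases hz : z ∈ tsupport g
    · rw [(hF.differentiable one_ne_zero z).lineDeriv_eq_fderiv, eF z (hsub hz)]
    · rw [image_eq_zero_of_notMem_tsupport hz]; simp
  have e2 : ∫ z, lineDeriv ℝ g z (-(ee j)) * (χ z * f z) =
      ∫ z, - (f z * fderiv ℝ g z (ee j)) := by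
    apply integral_congr_ae
    filter_upwards [hg.ae_differentiableAt (μ := volume)] with z hz
    rw [hz.lineDeriv_eq_fderiv, map_neg]
    by_cases hz' : z ∈ tsupport g
    · rw [hχ1 z (hsub hz')]; ring
    · have : fderiv ℝ g z = 0 := by
        by_contra h
        exact hz' (support_fderiv_subset ℝ h)
      simp [this]
  rw [e1, e2, integral_neg] at key
  linarith

/-- Zero extension of elements of `Lip₀`. -/
lemma lip0_ext {Ω : Set R2} {φ : R2 → ℝ} (hφ : MemLip0 Ω φ) :
    ∃ L : ℝ≥0, LipschitzWith L (Ω.indicator φ) := by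
  obtain ⟨⟨L, hL⟩, h0⟩ := hφ
  have heq : ∀ z ∈ closure Ω, Ω.indicator φ z = φ z := by
    intro z hz
    by_cases h : z ∈ Ω
    · simp [h]
    · rw [indicator_of_notMem h, h0 z ⟨hz, fun h' => h (interior_subset h')⟩]
  have cross : ∀ p q, p ∈ Ω → q ∉ closure Ω → dist (Ω.indicator φ p) (Ω.indicator φ q) ≤
      L * dist p q := by
    intro p q hp hq
    have hc : IsPreconnected (segment ℝ p q) := (convex_segment p q).isPreconnected
    obtain ⟨r, hr, hrf⟩ : ∃ r ∈ segment ℝ p q, r ∈ frontier Ω := by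
      by_contra hcon
      push Not at hcon
      have hcov : ∀ r ∈ segment ℝ p q, r ∈ closure Ω → r ∈ interior Ω := fun r hr h1 => by
        by_contra h2
        exact hcon r hr ⟨h1, h2⟩
      obtain ⟨r, -, h1, h2⟩ := hc (interior Ω) (closure Ω)ᶜ isOpen_interior
        isClosed_closure.isOpen_compl
        (fun r hr => by
          by_cases h : r ∈ closure Ω
          · exact Or.inl (hcov r hr h)
          · exact Or.inr h)
        ⟨p, left_mem_segment ℝ p q, hcov p (left_mem_segment ℝ p q) (subset_closure hp)⟩
        ⟨q, right_mem_segment ℝ p q, hq⟩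
      exact h2 (subset_closure (interior_subset h1))
    have hq' : q ∉ Ω := fun h => hq (subset_closure h)
    rw [heq p (subset_closure hp), indicator_of_notMem hq', ← h0 r hrf]
    refine (hL.dist_le_mul p (subset_closure hp) r hrf.1).trans ?_
    gcongr
    have := dist_add_dist_of_mem_segment hr
    linarith [dist_nonneg (x := r) (y := q)]
  refine ⟨L, LipschitzWith.of_dist_le_mul fun p q => ?_⟩
  by_cases hp : p ∈ closure Ω
  · by_cases hq : q ∈ closure Ω
    · rw [heq p hp, heq q hq]; exact hL.dist_le_mul p hp q hq
    · by_cases hp' : p ∈ Ω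
      · exact cross p q hp' hq
      · rw [indicator_of_notMem hp', indicator_of_notMem fun h => hq (subset_closure h)]
        simp; positivity
  · by_cases hq : q ∈ Ω
    · rw [dist_comm, dist_comm p q]; exact cross q p hq hp
    · rw [indicator_of_notMem hq, indicator_of_notMem fun h => hp (subset_closure h)]
      simp; positivity

lemma lip0_ext_eq {Ω : Set R2} {φ : R2 → ℝ} (hφ : MemLip0 Ω φ) {z : R2} (hz : z ∈ closure Ω) :
    Ω.indicator φ z = φ z := by
  by_cases h : z ∈ Ω
  · simp [h]
  · rw [indicator_of_notMem h, hφ.2 z ⟨hz, fun h' => h (interior_subset h')⟩]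

lemma lip0_compact {Ω : Set R2} (hb : Bornology.IsBounded Ω) (φ : R2 → ℝ) :
    HasCompactSupport (Ω.indicator φ) :=
  hb.isCompact_closure.of_isClosed_subset (isClosed_tsupport _)
    (closure_mono support_indicator_subset)

/-- The gradient of a function vanishing on a set vanishes a.e. on this set. -/
lemma fderiv_zero_ae {g : R2 → ℝ} {D : ℝ≥0} (hg : LipschitzWith D g) {s : Set R2}
    (hs : MeasurableSet s) (h0 : ∀ z ∈ s, g z = 0) :
    ∀ᵐ z ∂(volume : Measure R2), z ∈ s → fderiv ℝ g z = 0 := by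
  have hd := hg.ae_differentiableAt (μ := (volume : Measure R2))
  let t : Set R2 := s ∩ {z | DifferentiableAt ℝ g z}
  have ht : MeasurableSet t := hs.inter (measurableSet_of_differentiableAt ℝ g)
  let f : R2 → R2 := fun z => g z • ee 0
  let f' : R2 → R2 →L[ℝ] R2 := fun z => (fderiv ℝ g z).smulRight (ee 0)
  have hA : ApproximatesLinearOn f (0 : R2 →L[ℝ] R2) t 0 := by
    intro x hx y hy
    simp [f, h0 x hx.1, h0 y hy.1]
  have key := hA.norm_fderiv_sub_le (volume : Measure R2) ht f'
    (fun x hx => (hx.2.hasFDerivAt.smul_const (ee 0)).hasFDerivWithinAt)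
  rw [ae_restrict_iff' ht] at key
  filter_upwards [key, hd] with z h1 h2 h3
  have h4 := h1 ⟨h3, h2⟩
  have h5 : f' z = 0 := by
    rw [sub_zero] at h4
    exact nnnorm_eq_zero.1 (le_antisymm h4 bot_le)
  ext v
  have h6 : fderiv ℝ g z v • ee 0 = 0 := by
    have := congrArg (fun T : R2 →L[ℝ] R2 => T v) h5
    simpa [f'] using this
  rcases smul_eq_zero.1 h6 with h | h
  · simpa using h
  · exfalso
    have := norm_ee 0
    rw [h] at this; simp at this

/-- The pairing of a phase gradient with a test function. -/
def BP (Ω : Set R2) (a : Fin 2 → R2 → ℝ) (φ : R2 → ℝ) : ℝ :=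
  ∫ z in Ω, (1 / 2) * (-(a 1 z) * fderiv ℝ φ z (ee 0) + a 0 z * fderiv ℝ φ z (ee 1))

lemma BP_ext {Ω : Set R2} (ho : IsOpen Ω) {φ : R2 → ℝ} (hφ : MemLip0 Ω φ)
    (a : Fin 2 → R2 → ℝ) : BP Ω a φ = BP univ a (Ω.indicator φ) := by
  obtain ⟨L, hL⟩ := lip0_ext hφ
  have h0 := fderiv_zero_ae hL ho.measurableSet.compl
    (fun z hz => indicator_of_notMem hz φ)
  unfold BP
  rw [Measure.restrict_univ]
  have : ∀ z ∈ Ω, fderiv ℝ (Ω.indicator φ) z = fderiv ℝ φ z := by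
    intro z hz
    apply Filter.EventuallyEq.fderiv_eq
    filter_upwards [ho.mem_nhds hz] with y hy
    simp [hy]
  have e : ∀ᵐ z ∂(volume : Measure R2), z ∉ Ω →
      (1 / 2 : ℝ) * (-(a 1 z) * fderiv ℝ (Ω.indicator φ) z (ee 0) +
        a 0 z * fderiv ℝ (Ω.indicator φ) z (ee 1)) = 0 := by
    filter_upwards [h0] with z h1 h2
    simp [h1 h2]
  rw [← setIntegral_eq_integral_of_ae_compl_eq_zero e]
  refine setIntegral_congr_fun ho.measurableSet fun z hz => ?_
  simp only [this z hz]

lemma fderiv_bound {g : R2 → ℝ} {D : ℝ≥0} (hg : LipschitzWith D g) (z : R2) (j : Fin 2) :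
    |fderiv ℝ g z (ee j)| ≤ D := by
  have h1 := norm_fderiv_le_of_lipschitz ℝ hg (x₀ := z)
  have h2 := (fderiv ℝ g z).le_opNorm (ee j)
  rw [norm_ee, mul_one] at h2
  exact h2.trans h1

lemma fderiv_off {g : R2 → ℝ} {z : R2} (hz : z ∉ tsupport g) : fderiv ℝ g z = 0 := by
  by_contra h
  exact hz (support_fderiv_subset ℝ h)

/-- Gradients are divergence free after rotation. -/
lemma BP_smooth {η g : R2 → ℝ} {D : ℝ≥0} (hη : ContDiff ℝ (⊤ : ℕ∞) η)
    (hg : LipschitzWith D g) (hgc : HasCompactSupport g) :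
    BP univ (fun j z => fderiv ℝ η z (ee j)) g = 0 := by
  have hc : ∀ j, ContDiff ℝ 1 (fun z => fderiv ℝ η z (ee j)) := fun j =>
    (hη.fderiv_right (m := 1) (right_eq_inf.mp rfl)).clm_apply contDiff_const
  have hintg : ∀ i j, Integrable (fun z => fderiv ℝ η z (ee i) * fderiv ℝ g z (ee j)) := by
    intro i j
    have h1 : IntegrableOn (fun z => fderiv ℝ η z (ee i)) (tsupport g) :=
      (hc i).continuous.continuousOn.integrableOn_compact hgc
    have h2 : IntegrableOn (fun z => fderiv ℝ η z (ee i) * fderiv ℝ g z (ee j)) (tsupport g) :=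
      Integrable.mul_bdd (c := D) h1 (measurable_fderiv_apply_const ℝ g (ee j)).aestronglyMeasurable
        (Eventually.of_forall fun z => fderiv_bound hg z j)
    refine (integrableOn_iff_integrable_of_support_subset ?_).1 h2
    intro z hz
    by_contra h
    exact hz (by simp [fderiv_off h])
  unfold BP
  rw [Measure.restrict_univ, integral_const_mul]
  have e : ∫ z, (-(fderiv ℝ η z (ee 1)) * fderiv ℝ g z (ee 0) +
      fderiv ℝ η z (ee 0) * fderiv ℝ g z (ee 1)) =
      - (∫ z, fderiv ℝ η z (ee 1) * fderiv ℝ g z (ee 0)) +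
      ∫ z, fderiv ℝ η z (ee 0) * fderiv ℝ g z (ee 1) := by
    have := integral_add (hintg 1 0).neg (hintg 0 1)
    simp only [Pi.neg_apply] at this
    rw [← integral_neg, ← this]
    congr 1; ext z; ring
  rw [e, ibp (hc 1) hg hgc 0, ibp (hc 0) hg hgc 1]
  have sym : ∀ z, fderiv ℝ (fun z => fderiv ℝ η z (ee 1)) z (ee 0) =
      fderiv ℝ (fun z => fderiv ℝ η z (ee 0)) z (ee 1) := by
    intro z
    have hd : DifferentiableAt ℝ (fderiv ℝ η) z :=
      ((hη.fderiv_right (m := 1) (right_eq_inf.mp rfl)).differentiable one_ne_zero) z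
    have hs := (hη.contDiffAt (x := z)).isSymmSndFDerivAt (by simpa using ENat.LEInfty.out)
    have h1 : ∀ j, HasFDerivAt (fun z => fderiv ℝ η z (ee j)) _ z := fun j =>
      hd.hasFDerivAt.clm_apply (hasFDerivAt_const (ee j) z)
    rw [(h1 1).fderiv, (h1 0).fderiv]
    simpa using hs.eq (ee 0) (ee 1)
  simp_rw [sym]
  ring

/-! ### Jacobian of the vortex -/

/-- Regularized radial field. -/
def rad (p : R2) (δ : ℝ) (j : Fin 2) (z : R2) : ℝ := (‖z - p‖ ^ 2 + δ ^ 2)⁻¹ * (z - p) j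

lemma contDiff_coord (p : R2) (j : Fin 2) : ContDiff ℝ (⊤ : ℕ∞) (fun z : R2 => (z - p) j) :=
  (EuclideanSpace.proj (𝕜 := ℝ) j : R2 →L[ℝ] ℝ).contDiff.comp (contDiff_id.sub contDiff_const)

lemma contDiff_rad (p : R2) {δ : ℝ} (hδ : 0 < δ) (j : Fin 2) :
    ContDiff ℝ (⊤ : ℕ∞) (rad p δ j) := by
  have h1 : ContDiff ℝ (⊤ : ℕ∞) (fun z : R2 => ‖z - p‖ ^ 2 + δ ^ 2) :=
    ((contDiff_id.sub contDiff_const).norm_sq ℝ).add contDiff_const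
  exact (h1.inv fun z => by positivity).mul (contDiff_coord p j)

lemma fderiv_rad (p : R2) {δ : ℝ} (hδ : 0 < δ) (j : Fin 2) (z : R2) :
    fderiv ℝ (rad p δ j) z (ee j) = (‖z - p‖ ^ 2 + δ ^ 2)⁻¹ -
      2 * (z - p) j ^ 2 * (‖z - p‖ ^ 2 + δ ^ 2)⁻¹ ^ 2 := by
  obtain ⟨D, hD, hDj⟩ := hasFDerivAt_normsq p z
  have hpos : ‖z - p‖ ^ 2 + δ ^ 2 ≠ 0 := by positivity
  have h1 : HasFDerivAt (fun z => (‖z - p‖ ^ 2 + δ ^ 2)⁻¹) _ z :=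
    (hasDerivAt_inv hpos).comp_hasFDerivAt z (hD.add_const (δ ^ 2))
  have h2 : HasFDerivAt (fun z : R2 => (z - p) j) (EuclideanSpace.proj (𝕜 := ℝ) j : R2 →L[ℝ] ℝ) z :=
    (EuclideanSpace.proj (𝕜 := ℝ) j : R2 →L[ℝ] ℝ).hasFDerivAt.comp z
      ((hasFDerivAt_id z).sub_const p)
  have h3 : HasFDerivAt (rad p δ j) _ z := h1.mul h2
  rw [h3.fderiv]
  simp [hDj]
  simp [ee]
  field_simp
  ring

lemma normsq_coord (z : R2) : ‖z‖ ^ 2 = z 0 ^ 2 + z 1 ^ 2 := by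
  rw [EuclideanSpace.norm_sq_eq]; simp

lemma div_rad (p : R2) {δ : ℝ} (hδ : 0 < δ) (z : R2) :
    fderiv ℝ (rad p δ 0) z (ee 0) + fderiv ℝ (rad p δ 1) z (ee 1) =
      2 * δ ^ 2 / (‖z - p‖ ^ 2 + δ ^ 2) ^ 2 := by
  have hpos : ‖z - p‖ ^ 2 + δ ^ 2 ≠ 0 := by positivity
  rw [fderiv_rad p hδ, fderiv_rad p hδ]
  have h := normsq_coord (z - p)
  field_simp
  linear_combination (2 : ℝ) * h

lemma peak_scale (p : R2) {δ : ℝ} (hδ : 0 < δ) (g : R2 → ℝ) :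
    ∫ z, 2 * δ ^ 2 / (‖z - p‖ ^ 2 + δ ^ 2) ^ 2 * g z =
      ∫ w, 2 / (1 + ‖w‖ ^ 2) ^ 2 * g (p + δ • w) := by
  have h1 := Measure.integral_comp_smul (volume : Measure R2)
    (fun z => 2 * δ ^ 2 / (‖z‖ ^ 2 + δ ^ 2) ^ 2 * g (p + z)) δ
  have h2 : ∫ z, 2 * δ ^ 2 / (‖z - p‖ ^ 2 + δ ^ 2) ^ 2 * g z =
      ∫ z, 2 * δ ^ 2 / (‖z‖ ^ 2 + δ ^ 2) ^ 2 * g (p + z) := by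
    rw [← integral_sub_right_eq_self
      (fun z => 2 * δ ^ 2 / (‖z‖ ^ 2 + δ ^ 2) ^ 2 * g (p + z)) p]
    simp
  rw [h2]
  rw [finrank_R2, smul_eq_mul, abs_of_nonneg (by positivity)] at h1
  have h3 : ∫ w, 2 / (1 + ‖w‖ ^ 2) ^ 2 * g (p + δ • w) =
      δ ^ 2 * ∫ w : R2, 2 * δ ^ 2 / (‖δ • w‖ ^ 2 + δ ^ 2) ^ 2 * g (p + δ • w) := by
    rw [← integral_const_mul]
    congr 1; ext w
    rw [norm_smul, Real.norm_of_nonneg hδ.le]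
    have : (1 + ‖w‖ ^ 2) ≠ 0 := by positivity
    have : ((δ * ‖w‖) ^ 2 + δ ^ 2) ≠ 0 := by positivity
    field_simp
    ring
  rw [h3, h1]
  field_simp

lemma BP_vortex {g : R2 → ℝ} {D : ℝ≥0} (hg : LipschitzWith D g) (hgc : HasCompactSupport g)
    (p : R2) : BP univ (vort p) g = Real.pi * g p := by
  set δ : ℕ → ℝ := fun n => 1 / ((n : ℝ) + 1) with hδdef
  have hδ0 : ∀ n, 0 < δ n := fun n => Nat.one_div_pos_of_nat
  have hδ : Tendsto δ atTop (𝓝 0) := tendsto_one_div_add_atTop_nhds_zero_nat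
  have coord : ∀ (z : R2) (j : Fin 2), |z j| ≤ ‖z‖ := fun z j => by
    simpa using PiLp.norm_apply_le z j
  obtain ⟨M, hM⟩ := hgc.exists_bound_of_continuous hg.continuous
  -- the peak integrals
  have t1 : Tendsto (fun n => ∫ w : R2, 2 / (1 + ‖w‖ ^ 2) ^ 2 * g (p + δ n • w)) atTop
      (𝓝 (∫ w : R2, 2 / (1 + ‖w‖ ^ 2) ^ 2 * g p)) := by
    apply tendsto_integral_of_dominated_convergence (fun w : R2 => 2 / (1 + ‖w‖ ^ 2) ^ 2 * M)
    · intro n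
      refine peak_integral.1.aestronglyMeasurable.mul ?_
      have : Continuous fun w : R2 => g (p + δ n • w) := hg.continuous.comp (by fun_prop)
      exact this.aestronglyMeasurable
    · exact peak_integral.1.mul_const M
    · intro n
      filter_upwards with w
      rw [norm_mul, Real.norm_of_nonneg (by positivity)]
      gcongr
      exact hM _
    · filter_upwards with w
      refine Tendsto.const_mul _ ((hg.continuous.tendsto p).comp ?_)
      have := (hδ.smul_const w).const_add p
      simpa using this
  rw [integral_mul_const, peak_integral.2] at t1
  -- integrability
  have hfm : ∀ j, AEStronglyMeasurable (fun z => fderiv ℝ g z (ee j)) volume := fun j =>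
    (measurable_fderiv_apply_const ℝ g (ee j)).aestronglyMeasurable
  have hdom : Integrable ((tsupport g).indicator (fun z => D * ‖z - p‖⁻¹)) := by
    rw [integrable_indicator_iff (isClosed_tsupport g).measurableSet]
    exact (inv_norm_integrableOn_bounded p hgc.isCompact.isBounded).const_mul _
  have hbd : ∀ (b : R2 → ℝ) (j : Fin 2) (z : R2), |b z| ≤ ‖z - p‖⁻¹ →
      ‖b z * fderiv ℝ g z (ee j)‖ ≤ (tsupport g).indicator (fun z => D * ‖z - p‖⁻¹) z := by
    intro b j z hb
    by_cases hz : z ∈ tsupport g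
    · rw [indicator_of_mem hz, norm_mul, mul_comm, Real.norm_eq_abs, Real.norm_eq_abs]
      exact mul_le_mul (fderiv_bound hg z j) hb (abs_nonneg _) (NNReal.coe_nonneg D)
    · rw [indicator_of_notMem hz, fderiv_off hz]; simp
  have hradb : ∀ n j, ∀ z, |rad p (δ n) j z| ≤ ‖z - p‖⁻¹ := by
    intro n j z
    have h0 := hδ0 n
    rw [rad, abs_mul, abs_of_nonneg (by positivity)]
    by_cases hr : ‖z - p‖ = 0
    · have := coord (z - p) j
      rw [hr] at this
      have h2 : |(z - p) j| = 0 := le_antisymm this (abs_nonneg _)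
      rw [h2, hr]; simp
    · have hr' : 0 < ‖z - p‖ := lt_of_le_of_ne (norm_nonneg _) (Ne.symm hr)
      calc (‖z - p‖ ^ 2 + δ n ^ 2)⁻¹ * |(z - p) j|
          ≤ (‖z - p‖ ^ 2)⁻¹ * ‖z - p‖ := by
            gcongr
            · nlinarith [sq_nonneg (δ n)]
            · exact coord _ _
        _ = ‖z - p‖⁻¹ := by field_simp
  have hradi : ∀ n j, Integrable (fun z => rad p (δ n) j z * fderiv ℝ g z (ee j)) := by
    intro n j
    refine hdom.mono' ((contDiff_rad p (hδ0 n) j).continuous.aestronglyMeasurable.mul (hfm j)) ?_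
    filter_upwards with z
    exact hbd _ j z (hradb n j z)
  have hdivi : ∀ n j, Integrable (fun z => fderiv ℝ (rad p (δ n) j) z (ee j) * g z) := by
    intro n j
    refine Continuous.integrable_of_hasCompactSupport ?_ hgc.mul_left
    exact (((contDiff_rad p (hδ0 n) j).continuous_fderiv (by simp)).clm_apply
      continuous_const).mul hg.continuous
  have id1 : ∀ n, ∫ z, (-(1 / 2 : ℝ)) * (rad p (δ n) 0 z * fderiv ℝ g z (ee 0) +
      rad p (δ n) 1 z * fderiv ℝ g z (ee 1)) =
      (1 / 2) * ∫ w : R2, 2 / (1 + ‖w‖ ^ 2) ^ 2 * g (p + δ n • w) := by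
    intro n
    have hc : ∀ j, ContDiff ℝ 1 (rad p (δ n) j) := fun j =>
      (contDiff_rad p (hδ0 n) j).of_le (by exact ENat.LEInfty.out)
    rw [integral_const_mul, integral_add (hradi n 0) (hradi n 1), ibp (hc 0) hg hgc,
      ibp (hc 1) hg hgc, ← peak_scale p (hδ0 n) g]
    have : ∫ z, 2 * δ n ^ 2 / (‖z - p‖ ^ 2 + δ n ^ 2) ^ 2 * g z =
        (∫ z, fderiv ℝ (rad p (δ n) 0) z (ee 0) * g z) +
        ∫ z, fderiv ℝ (rad p (δ n) 1) z (ee 1) * g z := by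
      rw [← integral_add (hdivi n 0) (hdivi n 1)]
      congr 1; ext z
      rw [← div_rad p (hδ0 n)]; ring
    rw [this]; ring
  have t2 : Tendsto (fun n => ∫ z, (-(1 / 2 : ℝ)) * (rad p (δ n) 0 z * fderiv ℝ g z (ee 0) +
      rad p (δ n) 1 z * fderiv ℝ g z (ee 1))) atTop (𝓝 (BP univ (vort p) g)) := by
    unfold BP
    rw [Measure.restrict_univ]
    apply tendsto_integral_of_dominated_convergence
      (fun z => (tsupport g).indicator (fun z => D * ‖z - p‖⁻¹) z)
    · intro n
      exact (((hradi n 0).add (hradi n 1)).const_mul _).aestronglyMeasurable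
    · exact hdom
    · intro n
      filter_upwards with z
      have h0 := hbd _ 0 z (hradb n 0 z)
      have h1 := hbd _ 1 z (hradb n 1 z)
      rw [norm_mul]
      have := norm_add_le (rad p (δ n) 0 z * fderiv ℝ g z (ee 0))
        (rad p (δ n) 1 z * fderiv ℝ g z (ee 1))
      rw [norm_neg, Real.norm_of_nonneg (by norm_num : (0 : ℝ) ≤ 1 / 2)]
      linarith
    · have hne := ae_ne_R2 p (Ω := univ)
      rw [Measure.restrict_univ] at hne
      filter_upwards [hne] with z hz
      have hr : ‖z - p‖ ≠ 0 := norm_ne_zero_iff.2 (sub_ne_zero.2 hz)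
      have hi : Tendsto (fun n => (‖z - p‖ ^ 2 + δ n ^ 2)⁻¹) atTop (𝓝 (‖z - p‖ ^ 2)⁻¹) := by
        have : Tendsto (fun n => ‖z - p‖ ^ 2 + δ n ^ 2) atTop (𝓝 (‖z - p‖ ^ 2 + 0 ^ 2)) :=
          tendsto_const_nhds.add (hδ.pow 2)
        have h2 : ‖z - p‖ ^ 2 + (0 : ℝ) ^ 2 = ‖z - p‖ ^ 2 := by ring
        rw [h2] at this
        exact this.inv₀ (pow_ne_zero 2 hr)
      have hn : Complex.normSq (cc z - cc p) = ‖z - p‖ ^ 2 := by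
        rw [Complex.normSq_eq_norm_sq, norm_cc_sub]
      have v0 : vort p 0 z = - ((‖z - p‖ ^ 2)⁻¹ * (z - p) 1) := by
        rw [vort, eC_zero, one_div, Complex.inv_im, hn]
        simp [cc_im]; ring
      have v1 : vort p 1 z = (‖z - p‖ ^ 2)⁻¹ * (z - p) 0 := by
        rw [vort, eC_one, Complex.div_im, hn]
        simp [cc_re]; ring
      rw [v0, v1]
      have l := (((hi.mul_const ((z - p) 0)).mul_const (fderiv ℝ g z (ee 0))).add
        ((hi.mul_const ((z - p) 1)).mul_const (fderiv ℝ g z (ee 1)))).const_mul (-(1 / 2 : ℝ))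
      refine (l.congr fun n => rfl).trans_eq ?_
      congr 1
      ring
  simp_rw [id1] at t2
  have := tendsto_nhds_unique t2 (t1.const_mul (1 / 2))
  rw [this]; ring

/-! ### Dipoles -/

/-- Cutoff function. -/
def chi : ContDiffBump (0 : ℂ) := ⟨2, 3, by norm_num, by norm_num⟩

/-- Truncated model phase. -/
def eta0 (ζ : ℂ) : ℝ := -((1 - chi ζ) * (Complex.log (1 + ζ⁻¹)).im)

lemma slit_mem {ζ : ℂ} (h : 1 < ‖ζ‖) : 1 + ζ⁻¹ ∈ Complex.slitPlane :=
  Complex.mem_slitPlane_of_norm_lt_one (by rw [norm_inv]; exact inv_lt_one_of_one_lt₀ h)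

lemma contDiff_eta0 : ContDiff ℝ (⊤ : ℕ∞) eta0 := by
  refine contDiff_iff_contDiffAt.2 fun ζ => ?_
  by_cases h : 1 < ‖ζ‖
  · have h0 : ζ ≠ 0 := by
      rintro rfl
      simp at h
      linarith
    have h1 : ContDiffAt ℝ (⊤ : ℕ∞) (fun ζ : ℂ => 1 + ζ⁻¹) ζ :=
      contDiffAt_const.add (contDiffAt_inv ℝ h0)
    have h2 : ContDiffAt ℝ (⊤ : ℕ∞) Complex.log (1 + ζ⁻¹) :=
      (Complex.contDiffAt_log (slit_mem h)).restrict_scalars ℝ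
    have h3 : ContDiffAt ℝ (⊤ : ℕ∞) (fun ζ : ℂ => Complex.log (1 + ζ⁻¹)) ζ :=
      ContDiffAt.comp (g := Complex.log) (f := fun ζ : ℂ => 1 + ζ⁻¹) ζ h2 h1
    have h4 : ContDiffAt ℝ (⊤ : ℕ∞) (fun ζ : ℂ => (Complex.log (1 + ζ⁻¹)).im) ζ :=
      Complex.imCLM.contDiff.contDiffAt.comp ζ h3
    exact ((contDiffAt_const.sub chi.contDiffAt).mul h4).neg
  · have h1 : ζ ∈ ball (0 : ℂ) 2 := by
      rw [mem_ball_zero_iff]; linarith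
    have h2 : eta0 =ᶠ[𝓝 ζ] fun _ => 0 := by
      filter_upwards [isOpen_ball.mem_nhds h1] with ξ hξ
      have : chi ξ = 1 := chi.one_of_mem_closedBall (ball_subset_closedBall hξ)
      simp [eta0, this]
    exact contDiffAt_const.congr_of_eventuallyEq h2

lemma eta0_far {ζ : ℂ} (h : 3 < ‖ζ‖) : eta0 ζ = -(Complex.log (1 + ζ⁻¹)).im := by
  have : chi ζ = 0 := chi.zero_of_le_dist (by
    rw [dist_zero_right]; exact h.le)
  simp [eta0, this]

/-- Rescaled variable. -/
def zt (x y z : R2) : ℂ := (cc z - cc y) / (cc y - cc x)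

/-- Rescaled phase. -/
def eta (x y z : R2) : ℝ := eta0 (zt x y z)

lemma hasFDerivAt_zt (x y z : R2) :
    ∃ D : R2 →L[ℝ] ℂ, HasFDerivAt (zt x y) D z ∧ ∀ j, D (ee j) = eC j / (cc y - cc x) := by
  have h1 : HasFDerivAt (fun z : R2 => cc z - cc y) (cc : R2 →L[ℝ] ℂ) z :=
    (cc : R2 →L[ℝ] ℂ).hasFDerivAt.sub_const _
  refine ⟨_, (h1.mul_const (cc y - cc x)⁻¹).congr_of_eventuallyEq
    (Eventually.of_forall fun z => by simp [zt, div_eq_mul_inv]), fun j => ?_⟩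
  simp [eC, div_eq_mul_inv, mul_comm]

lemma contDiff_zt (x y : R2) : ContDiff ℝ (⊤ : ℕ∞) (zt x y) := by
  unfold zt
  exact (cc.contDiff.sub contDiff_const).div_const _

lemma contDiff_eta (x y : R2) : ContDiff ℝ (⊤ : ℕ∞) (eta x y) :=
  contDiff_eta0.comp (contDiff_zt x y)

lemma norm_zt (x y z : R2) : ‖zt x y z‖ = dist z y / dist x y := by
  rw [zt, norm_div, norm_cc_sub, norm_cc_sub, dist_eq_norm, dist_eq_norm, norm_sub_rev y x]

lemma cc_sub_ne {x y : R2} (h : x ≠ y) : cc y - cc x ≠ 0 := by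
  rw [sub_ne_zero]
  exact fun h' => h (cc.injective h').symm

lemma fderiv_eta_far {x y z : R2} (h : x ≠ y) (hz : 3 * dist x y < dist z y) (j : Fin 2) :
    fderiv ℝ (eta x y) z (ee j) = -(vort x j z - vort y j z) := by
  have hd : 0 < dist x y := dist_pos.2 h
  have hn : 3 < ‖zt x y z‖ := by
    rw [norm_zt, lt_div_iff₀ hd]; exact hz
  obtain ⟨D, hD, hDj⟩ := hasFDerivAt_zt x y z
  set ζ := zt x y z with hζ
  have h0 : ζ ≠ 0 := by
    rw [← norm_pos_iff]; linarith
  have h1 : 1 + ζ ≠ 0 := by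
    intro h'
    have : ζ = -1 := by linear_combination h'
    rw [this] at hn
    norm_num at hn
  have hl : HasDerivAt (fun ζ : ℂ => Complex.log (1 + ζ⁻¹)) ((-(ζ ^ 2)⁻¹) / (1 + ζ⁻¹)) ζ :=
    ((hasDerivAt_inv h0).const_add 1).clog (slit_mem (by linarith))
  have hl2 : HasFDerivAt (fun z => Complex.log (1 + (zt x y z)⁻¹)) _ z :=
    HasFDerivAt.comp (g := fun ζ : ℂ => Complex.log (1 + ζ⁻¹)) (f := zt x y) z
      (hl.hasFDerivAt.restrictScalars ℝ) hD
  have hl3 : HasFDerivAt (fun z => -(Complex.log (1 + (zt x y z)⁻¹)).im) _ z :=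
    (Complex.imCLM.hasFDerivAt.comp z hl2).neg
  have hev : eta x y =ᶠ[𝓝 z] fun z => -(Complex.log (1 + (zt x y z)⁻¹)).im := by
    have : ∀ᶠ z in 𝓝 z, 3 < ‖zt x y z‖ :=
      (contDiff_zt x y).continuous.norm.continuousAt.eventually (lt_mem_nhds hn)
    filter_upwards [this] with w hw
    exact eta0_far hw
  rw [(hl3.congr_of_eventuallyEq hev).fderiv]
  have hc := cc_sub_ne h
  have e1 : cc z - cc y = (cc y - cc x) * ζ := by
    rw [hζ, zt]; field_simp
  have e2 : cc z - cc x = (cc y - cc x) * (1 + ζ) := by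
    linear_combination e1
  have key : ((-(ζ ^ 2)⁻¹) / (1 + ζ⁻¹)) * (eC j / (cc y - cc x)) =
      eC j / (cc z - cc x) - eC j / (cc z - cc y) := by
    rw [e1, e2]
    have h2 : 1 + ζ⁻¹ = (1 + ζ) / ζ := by field_simp; ring
    rw [h2]
    field_simp
    ring
  simp only [vort, ← Complex.sub_im, ← key]
  simp [hDj, mul_comm]

/-- The dipole. -/
def dip (x y z : R2) : ℂ := (phase (cc z - cc x) * (starRingEnd ℂ) (phase (cc z - cc y))) *
  Complex.exp ((eta x y z : ℂ) * Complex.I)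

/-- The current of the dipole. -/
def dipA (x y : R2) (j : Fin 2) (z : R2) : ℝ :=
  (vort x j z + -(vort y j z)) + fderiv ℝ (eta x y) z (ee j)

lemma isMult_dip {Ω : Set R2} (hb : Bornology.IsBounded Ω) (x y : R2) :
    IsMult Ω (dip x y) (dipA x y) :=
  (((isMult_vortex hb x).mul (isMult_vortex hb y).conj).mul (IsMult.smooth hb (contDiff_eta x y)))

lemma norm_dip (x y z : R2) : ‖dip x y z‖ = 1 := by
  rw [dip, norm_mul, norm_mul, RCLike.norm_conj, norm_phase, norm_phase,
    Complex.norm_exp_ofReal_mul_I]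
  norm_num

lemma measurable_eta (x y : R2) : Measurable (eta x y) := (contDiff_eta x y).continuous.measurable

lemma measurable_dip (x y : R2) : Measurable (dip x y) := by
  have h1 : ∀ p : R2, Measurable (fun z => phase (cc z - cc p)) := fun p =>
    measurable_phase.comp (continuous_cc.measurable.sub measurable_const)
  have h2 : Measurable (fun z => (starRingEnd ℂ) (phase (cc z - cc y))) :=
    Complex.continuous_conj.measurable.comp (h1 y)
  have h3 : Measurable (fun z => Complex.exp ((eta x y z : ℂ) * Complex.I)) :=
    ((Complex.measurable_ofReal.comp (measurable_eta x y)).mul_const _).cexp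
  exact ((h1 x).mul h2).mul h3

lemma measurable_dipA (x y : R2) (j : Fin 2) : Measurable (dipA x y j) := by
  have : Measurable fun z => fderiv ℝ (eta x y) z (ee j) :=
    measurable_fderiv_apply_const ℝ _ _
  exact ((measurable_vort x j).add (measurable_vort y j).neg).add this

lemma dipA_far {x y z : R2} (h : x ≠ y) (hz : 3 * dist x y < dist z y) (j : Fin 2) :
    dipA x y j z = 0 := by
  rw [dipA, fderiv_eta_far h hz]; ring

lemma dip_far {x y z : R2} (h : x ≠ y) (hz : 3 * dist x y < dist z y) : dip x y z = 1 := by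
  have hd : 0 < dist x y := dist_pos.2 h
  have hn : 3 < ‖zt x y z‖ := by
    rw [norm_zt, lt_div_iff₀ hd]; exact hz
  have hc := cc_sub_ne h
  set ζ := zt x y z with hζ
  have h0 : ζ ≠ 0 := by
    rw [← norm_pos_iff]; linarith
  have h1 : 1 + ζ ≠ 0 := by
    intro h'
    have : ζ = -1 := by linear_combination h'
    rw [this] at hn
    norm_num at hn
  have e1 : cc z - cc y = (cc y - cc x) * ζ := by
    rw [hζ, zt]; field_simp
  have e2 : cc z - cc x = (cc y - cc x) * (1 + ζ) := by
    linear_combination e1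
  have hy : cc z - cc y ≠ 0 := by rw [e1]; exact mul_ne_zero hc h0
  have hx : cc z - cc x ≠ 0 := by rw [e2]; exact mul_ne_zero hc h1
  set q : ℂ := 1 + ζ⁻¹ with hq
  have hq0 : q ≠ 0 := Complex.slitPlane_ne_zero (slit_mem (by linarith))
  have e3 : cc z - cc x = (cc z - cc y) * q := by
    rw [e1, e2, hq]; field_simp; ring
  have h2 : phase (cc z - cc x) * (starRingEnd ℂ) (phase (cc z - cc y)) =
      ((‖q‖⁻¹ : ℝ) : ℂ) * q := by
    have hxx : phase (cc z - cc x) = phase (cc z - cc y) * (((‖q‖⁻¹ : ℝ) : ℂ) * q) := by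
      rw [phase, phase, if_neg hx, if_neg hy, e3, norm_mul, mul_inv]
      push_cast; ring
    have hu : phase (cc z - cc y) * (starRingEnd ℂ) (phase (cc z - cc y)) = 1 := by
      rw [Complex.mul_conj, Complex.normSq_eq_norm_sq, norm_phase]; simp
    rw [hxx]
    linear_combination (((‖q‖⁻¹ : ℝ) : ℂ) * q) * hu
  have h3 : ((‖q‖⁻¹ : ℝ) : ℂ) * q = Complex.exp (Complex.arg q * Complex.I) := by
    conv_lhs => rw [← Complex.norm_mul_exp_arg_mul_I q]
    have : (‖q‖ : ℂ) ≠ 0 := by simpa using hq0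
    simp only [norm_mul, Complex.norm_real, norm_norm, Complex.norm_exp_ofReal_mul_I, mul_one]
    push_cast
    field_simp
  have h4 : eta x y z = -Complex.arg q := by
    rw [eta, eta0_far hn, Complex.log_im]
  rw [dip, h2, h3, h4, ← Complex.exp_add]
  push_cast
  rw [show (Complex.arg q : ℂ) * Complex.I + -(Complex.arg q : ℂ) * Complex.I = 0 by ring]
  simp

lemma eta0_bound : ∃ K : ℝ, 0 ≤ K ∧ ∀ ζ : ℂ, ‖ζ‖ ≤ 3 → ‖fderiv ℝ eta0 ζ‖ ≤ K := by
  have hc : Continuous (fderiv ℝ eta0) := contDiff_eta0.continuous_fderiv (by simp)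
  obtain ⟨K, hK⟩ := (isCompact_closedBall (0 : ℂ) 3).exists_bound_of_continuousOn hc.continuousOn
  refine ⟨K, (norm_nonneg _).trans (hK 0 (by simp)), fun ζ hζ => hK ζ (by simpa using hζ)⟩

lemma fderiv_eta_le {K : ℝ} (hK : ∀ ζ : ℂ, ‖ζ‖ ≤ 3 → ‖fderiv ℝ eta0 ζ‖ ≤ K)
    {x y z : R2} (h : x ≠ y) (hz : dist z y ≤ 3 * dist x y) (j : Fin 2) :
    |fderiv ℝ (eta x y) z (ee j)| ≤ K / dist x y := by
  have hd : 0 < dist x y := dist_pos.2 h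
  obtain ⟨D, hD, hDj⟩ := hasFDerivAt_zt x y z
  have h1 : HasFDerivAt (eta x y) _ z :=
    ((contDiff_eta0.differentiable (by simp)) (zt x y z)).hasFDerivAt.comp z hD
  rw [h1.fderiv]
  simp only [ContinuousLinearMap.comp_apply, hDj]
  refine ((fderiv ℝ eta0 (zt x y z)).le_opNorm _).trans ?_
  have h2 : ‖eC j / (cc y - cc x)‖ = (dist x y)⁻¹ := by
    rw [norm_div, norm_eC, norm_cc_sub, ← dist_eq_norm, dist_comm, one_div]
  rw [h2, div_eq_mul_inv]
  gcongr
  exact hK _ (by rw [norm_zt, div_le_iff₀ hd]; exact hz)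

lemma dipA_int : ∃ C : ℝ, 0 ≤ C ∧ ∀ x y : R2, x ≠ y → ∀ j,
    Integrable (dipA x y j) ∧ ∫ z, |dipA x y j z| ≤ C * dist x y := by
  obtain ⟨K, hK0, hK⟩ := eta0_bound
  refine ⟨10 * Real.pi + 8 * Real.pi + 16 * K * Real.pi, by positivity, fun x y h j => ?_⟩
  have hd : 0 < dist x y := dist_pos.2 h
  set d := dist x y with hdd
  obtain ⟨i1, v1⟩ := inv_norm_integrableOn x (R := 5 * d) (by positivity)
  obtain ⟨i2, v2⟩ := inv_norm_integrableOn y (R := 4 * d) (by positivity)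
  set B : R2 → ℝ := fun z => (ball x (5 * d)).indicator (fun z => ‖z - x‖⁻¹) z +
    (ball y (4 * d)).indicator (fun z => ‖z - y‖⁻¹) z +
    (ball y (4 * d)).indicator (fun _ => K / d) z with hB
  have i3 : IntegrableOn (fun _ : R2 => K / d) (ball y (4 * d)) :=
    integrableOn_const measure_ball_lt_top.ne
  have j1 := i1.integrable_indicator measurableSet_ball
  have j2 := i2.integrable_indicator measurableSet_ball
  have j3 := i3.integrable_indicator measurableSet_ball
  have hBi : Integrable B := (j1.add j2).add j3
  have hle : ∀ z, |dipA x y j z| ≤ B z := by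
    intro z
    by_cases hz : 3 * d < dist z y
    · rw [dipA_far h hz, abs_zero]
      have := fun (s : Set R2) (f : R2 → ℝ) (hf : ∀ z, 0 ≤ f z) =>
        indicator_nonneg (s := s) (f := f) (fun z _ => hf z) z
      have t1 := this (ball x (5 * d)) (fun z => ‖z - x‖⁻¹) (fun z => by positivity)
      have t2 := this (ball y (4 * d)) (fun z => ‖z - y‖⁻¹) (fun z => by positivity)
      have t3 := this (ball y (4 * d)) (fun z => K / d) (fun z => by positivity)
      exact add_nonneg (add_nonneg t1 t2) t3
    · push Not at hz
      have m2 : z ∈ ball y (4 * d) := by rw [mem_ball]; linarith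
      have m1 : z ∈ ball x (5 * d) := by
        rw [mem_ball]
        have := dist_triangle z y x
        rw [dist_comm y x] at this
        linarith
      simp only [hB, indicator_of_mem m1, indicator_of_mem m2]
      have a1 := abs_vort_le x j z
      have a2 := abs_vort_le y j z
      have a3 := fderiv_eta_le hK h hz j
      calc |dipA x y j z| ≤ |vort x j z| + |vort y j z| + |fderiv ℝ (eta x y) z (ee j)| := by
            rw [dipA]
            refine (abs_add_le _ _).trans (add_le_add_left ((abs_add_le _ _).trans ?_) _)
            rw [abs_neg]
        _ ≤ _ := add_le_add (add_le_add a1 a2) a3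
  have hi : Integrable (dipA x y j) := hBi.mono' (measurable_dipA x y j).aestronglyMeasurable
    (Eventually.of_forall hle)
  refine ⟨hi, (integral_mono hi.abs hBi hle).trans (le_of_eq ?_)⟩
  have hv : (volume : Measure R2).real (ball y (4 * d)) = Real.pi * (4 * d) ^ 2 := by
    rw [measureReal_def, EuclideanSpace.volume_ball_fin_two, ENNReal.toReal_mul,
      ENNReal.toReal_pow, ENNReal.toReal_ofReal (by positivity), ENNReal.toReal_ofReal Real.pi_nonneg]
    ring
  rw [hB, integral_add (by exact j1.add j2) j3, integral_add j1 j2, integral_indicator measurableSet_ball,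
    integral_indicator measurableSet_ball, integral_indicator measurableSet_ball, v1, v2,
    setIntegral_const, hv, smul_eq_mul]
  field_simp
  ring

lemma integrable_mul_fderiv {a : R2 → ℝ} {g : R2 → ℝ} {D : ℝ≥0} (hg : LipschitzWith D g)
    {Ω : Set R2} (ha : IntegrableOn a Ω) (j : Fin 2) :
    IntegrableOn (fun z => a z * fderiv ℝ g z (ee j)) Ω := by
  refine Integrable.mul_bdd (c := (D : ℝ)) ha
    (measurable_fderiv_apply_const ℝ _ _).aestronglyMeasurable
    (Eventually.of_forall fun z => fderiv_bound hg z j)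

lemma integrable_mul_fderiv_supp {a : R2 → ℝ} {g : R2 → ℝ} {D : ℝ≥0} (hg : LipschitzWith D g)
    (ha : IntegrableOn a (tsupport g)) (j : Fin 2) :
    Integrable (fun z => a z * fderiv ℝ g z (ee j)) := by
  refine (integrableOn_iff_integrable_of_support_subset (s := tsupport g) ?_).1
    (integrable_mul_fderiv hg ha j)
  intro z hz
  by_contra h
  exact hz (by simp [fderiv_off h])

lemma BP_add {a b : Fin 2 → R2 → ℝ} {g : R2 → ℝ} {D : ℝ≥0} (hg : LipschitzWith D g)
    (ha : ∀ j, IntegrableOn (a j) (tsupport g)) (hb : ∀ j, IntegrableOn (b j) (tsupport g)) :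
    BP univ (fun j z => a j z + b j z) g = BP univ a g + BP univ b g := by
  have hI := fun i j => integrable_mul_fderiv_supp hg (ha i) j
  have hJ := fun i j => integrable_mul_fderiv_supp hg (hb i) j
  unfold BP
  rw [Measure.restrict_univ, ← integral_add]
  · refine integral_congr_ae (Eventually.of_forall fun z => ?_)
    simp only
    ring
  · refine (((hI 1 0).neg.add (hI 0 1)).const_mul (1 / 2)).congr
      (Eventually.of_forall fun z => ?_)
    simp
  · refine (((hJ 1 0).neg.add (hJ 0 1)).const_mul (1 / 2)).congr
      (Eventually.of_forall fun z => ?_)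
    simp

lemma BP_neg (a : Fin 2 → R2 → ℝ) (g : R2 → ℝ) :
    BP univ (fun j z => -(a j z)) g = - BP univ a g := by
  unfold BP
  rw [← integral_neg]
  congr 1
  ext z
  ring

lemma BP_dip_univ {g : R2 → ℝ} {D : ℝ≥0} (hg : LipschitzWith D g) (hgc : HasCompactSupport g)
    (x y : R2) : BP univ (dipA x y) g = Real.pi * (g x - g y) := by
  have hb := hgc.isCompact.isBounded
  have hc : ∀ j, Continuous (fun z => fderiv ℝ (eta x y) z (ee j)) := fun j =>
    ((contDiff_eta x y).continuous_fderiv (by simp)).clm_apply continuous_const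
  have h1 : ∀ p j, IntegrableOn (vort p j) (tsupport g) := fun p j => vort_integrableOn p j hb
  have h2 : BP univ (dipA x y) g = _ :=
    BP_add hg (a := fun j z => vort x j z + -(vort y j z))
      (b := fun j z => fderiv ℝ (eta x y) z (ee j)) (fun j => (h1 x j).add (h1 y j).neg)
      (fun j => (hc j).continuousOn.integrableOn_compact hgc.isCompact)
  rw [h2, BP_add hg (a := vort x) (b := fun j z => -(vort y j z)) (h1 x) (fun j => (h1 y j).neg),
    BP_neg, BP_smooth (contDiff_eta x y) hg hgc, BP_vortex hg hgc, BP_vortex hg hgc]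
  ring

/-! ### Infinite products of dipoles -/

/-- Infinite product of dipoles. -/
def DW (p q : ℕ → R2) (z : R2) : ℂ := ∏' i, dip (p i) (q i) z

/-- Its current. -/
def DA (p q : ℕ → R2) (j : Fin 2) (z : R2) : ℝ := ∑' i, dipA (p i) (q i) j z

lemma far_ae {p q : ℕ → R2} (hs : Summable fun i => dist (p i) (q i)) :
    ∀ᵐ z ∂(volume : Measure R2), ∀ᶠ i in atTop, 3 * dist (p i) (q i) < dist z (q i) := by
  have hsq : Summable fun i => dist (p i) (q i) ^ 2 := by
    refine Summable.of_nonneg_of_le (fun i => by positivity) (fun i => ?_)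
      (hs.mul_left (∑' i, dist (p i) (q i)))
    rw [pow_two]
    exact mul_le_mul_of_nonneg_right (hs.le_tsum i fun _ _ => dist_nonneg) dist_nonneg
  have h1 : ∑' i, (volume : Measure R2) (closedBall (q i) (3 * dist (p i) (q i))) ≠ ∞ := by
    have : ∀ i, (volume : Measure R2) (closedBall (q i) (3 * dist (p i) (q i))) =
        ENNReal.ofReal (9 * Real.pi * dist (p i) (q i) ^ 2) := by
      intro i
      rw [EuclideanSpace.volume_closedBall_fin_two, ← ENNReal.ofReal_pow (by positivity),
        ← ENNReal.ofReal_mul (by positivity)]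
      congr 1
      ring
    simp_rw [this]
    exact (hsq.mul_left _).tsum_ofReal_ne_top
  filter_upwards [ae_eventually_notMem h1] with z hz
  filter_upwards [hz] with i hi
  rw [mem_closedBall] at hi
  exact not_le.1 hi

lemma finite_of_far {p q : ℕ → R2} (h : ∀ i, p i ≠ q i) {z : R2}
    (hz : ∀ᶠ i in atTop, 3 * dist (p i) (q i) < dist z (q i)) :
    Function.HasFiniteMulSupport (fun i => dip (p i) (q i) z) ∧
      ∀ j, Function.HasFiniteSupport (fun i => dipA (p i) (q i) j z) := by
  obtain ⟨M, hM⟩ := eventually_atTop.1 hz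
  constructor
  · refine (Finset.finite_toSet (Finset.range M)).subset fun i hi => ?_
    by_contra hc
    simp only [Finset.coe_range, mem_Iio, not_lt] at hc
    exact hi (dip_far (h i) (hM i hc))
  · intro j
    refine (Finset.finite_toSet (Finset.range M)).subset fun i hi => ?_
    by_contra hc
    simp only [Finset.coe_range, mem_Iio, not_lt] at hc
    exact hi (dipA_far (h i) (hM i hc) j)

lemma DW_tendsto {p q : ℕ → R2} (h : ∀ i, p i ≠ q i) {z : R2}
    (hz : ∀ᶠ i in atTop, 3 * dist (p i) (q i) < dist z (q i)) :
    Tendsto (fun n => ∏ i ∈ Finset.range n, dip (p i) (q i) z) atTop (𝓝 (DW p q z)) :=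
  (multipliable_of_hasFiniteMulSupport (finite_of_far h hz).1).hasProd.tendsto_prod_nat

lemma DA_summable {p q : ℕ → R2} (h : ∀ i, p i ≠ q i) {z : R2}
    (hz : ∀ᶠ i in atTop, 3 * dist (p i) (q i) < dist z (q i)) (j : Fin 2) :
    Summable (fun i => |dipA (p i) (q i) j z|) := by
  refine summable_of_hasFiniteSupport (((finite_of_far h hz).2 j).subset fun i hi => ?_)
  simpa using hi

lemma integrable_tsum_aux {F : ℕ → R2 → ℝ} (hF : ∀ i, Integrable (F i))
    (hs : Summable fun i => ∫ z, |F i z|) (hae : ∀ᵐ z, Summable fun i => F i z) :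
    Integrable (fun z => ∑' i, F i z) := by
  refine ⟨aestronglyMeasurable_of_tendsto_ae (u := atTop)
    (f := fun n z => ∑ i ∈ Finset.range n, F i z) (fun n => ?_) ?_, ?_⟩
  · exact (integrable_finset_sum _ fun i _ => hF i).aestronglyMeasurable
  · filter_upwards [hae] with z hz
    exact hz.hasSum.tendsto_sum_nat
  · rw [hasFiniteIntegral_iff_enorm]
    calc ∫⁻ z, ‖∑' i, F i z‖ₑ ≤ ∫⁻ z, ∑' i, ‖F i z‖ₑ := by
          refine lintegral_mono fun z => ?_
          exact enorm_tsum_le_tsum_enorm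
      _ = ∑' i, ∫⁻ z, ‖F i z‖ₑ :=
          lintegral_tsum fun i => (hF i).aestronglyMeasurable.enorm
      _ = ∑' i, ENNReal.ofReal (∫ z, |F i z|) := by
          congr 1
          ext i
          rw [← ofReal_integral_norm_eq_lintegral_enorm (hF i)]
          rfl
      _ < ∞ := hs.tsum_ofReal_lt_top

lemma dip_sum {C : ℝ} (hC : ∀ x y : R2, x ≠ y → ∀ j,
      Integrable (dipA x y j) ∧ ∫ z, |dipA x y j z| ≤ C * dist x y)
    {p q : ℕ → R2} (h : ∀ i, p i ≠ q i) (hs : Summable fun i => dist (p i) (q i)) (j : Fin 2) :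
    Summable (fun i => ∫ z, |dipA (p i) (q i) j z|) :=
  Summable.of_nonneg_of_le (fun i => integral_nonneg fun z => abs_nonneg _)
    (fun i => (hC _ _ (h i) j).2) (hs.mul_left C)

lemma gint {C : ℝ} (hC : ∀ x y : R2, x ≠ y → ∀ j,
      Integrable (dipA x y j) ∧ ∫ z, |dipA x y j z| ≤ C * dist x y)
    {p q : ℕ → R2} (h : ∀ i, p i ≠ q i) (hs : Summable fun i => dist (p i) (q i)) (j : Fin 2) :
    Integrable (fun z => ∑' i, |dipA (p i) (q i) j z|) := by
  refine integrable_tsum_aux (fun i => (hC _ _ (h i) j).1.abs) ?_ ?_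
  · simpa using dip_sum hC h hs j
  · filter_upwards [far_ae hs] with z hz
    exact DA_summable h hz j

lemma DA_int {C : ℝ} (hC : ∀ x y : R2, x ≠ y → ∀ j,
      Integrable (dipA x y j) ∧ ∫ z, |dipA x y j z| ≤ C * dist x y)
    {p q : ℕ → R2} (h : ∀ i, p i ≠ q i) (hs : Summable fun i => dist (p i) (q i)) (j : Fin 2) :
    Integrable (DA p q j) ∧ ∫ z, |DA p q j z| ≤ C * ∑' i, dist (p i) (q i) := by
  have h1 : Integrable (DA p q j) := by
    refine integrable_tsum_aux (fun i => (hC _ _ (h i) j).1) (dip_sum hC h hs j) ?_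
    filter_upwards [far_ae hs] with z hz
    exact (DA_summable h hz j).of_abs
  refine ⟨h1, ?_⟩
  calc ∫ z, |DA p q j z| ≤ ∫ z, ∑' i, |dipA (p i) (q i) j z| := by
        refine integral_mono_ae h1.abs (gint hC h hs j) ?_
        filter_upwards [far_ae hs] with z hz
        have := norm_tsum_le_tsum_norm (f := fun i => dipA (p i) (q i) j z) (DA_summable h hz j)
        exact this
    _ = ∑' i, ∫ z, |dipA (p i) (q i) j z| :=
        (integral_tsum_of_summable_integral_norm (fun i => (hC _ _ (h i) j).1.abs)
          (by simpa using dip_sum hC h hs j)).symm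
    _ ≤ ∑' i, C * dist (p i) (q i) :=
        (dip_sum hC h hs j).tsum_le_tsum (fun i => (hC _ _ (h i) j).2) (hs.mul_left C)
    _ = _ := tsum_mul_left

lemma isMult_DW {C : ℝ} (hC : ∀ x y : R2, x ≠ y → ∀ j,
      Integrable (dipA x y j) ∧ ∫ z, |dipA x y j z| ≤ C * dist x y)
    {p q : ℕ → R2} (h : ∀ i, p i ≠ q i) (hs : Summable fun i => dist (p i) (q i))
    {Ω : Set R2} (hb : Bornology.IsBounded Ω) : IsMult Ω (DW p q) (DA p q) := by
  have hfar := ae_restrict_of_ae (s := Ω) (far_ae hs)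
  refine IsMult.of_tendsto (fun n => IsMult.prod (fun i => isMult_dip hb (p i) (q i)) n)
    (fun j z => ∑' i, |dipA (p i) (q i) j z|) (fun j => (gint hC h hs j).integrableOn) ?_ ?_ ?_
  · intro n j
    filter_upwards [hfar] with z hz
    exact (Finset.abs_sum_le_sum_abs _ _).trans
      ((DA_summable h hz j).sum_le_tsum _ fun i _ => abs_nonneg _)
  · filter_upwards [hfar] with z hz
    exact DW_tendsto h hz
  · intro j
    filter_upwards [hfar] with z hz
    exact (DA_summable h hz j).of_abs.hasSum.tendsto_sum_nat

lemma BP_DA_univ {C : ℝ} (hC : ∀ x y : R2, x ≠ y → ∀ j,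
      Integrable (dipA x y j) ∧ ∫ z, |dipA x y j z| ≤ C * dist x y)
    {p q : ℕ → R2} (h : ∀ i, p i ≠ q i) (hs : Summable fun i => dist (p i) (q i))
    {g : R2 → ℝ} {D : ℝ≥0} (hg : LipschitzWith D g) (hgc : HasCompactSupport g) :
    BP univ (DA p q) g = Real.pi * ∑' i, (g (p i) - g (q i)) := by
  set F : ℕ → R2 → ℝ := fun i z => (1 / 2) * (-(dipA (p i) (q i) 1 z) * fderiv ℝ g z (ee 0) +
    dipA (p i) (q i) 0 z * fderiv ℝ g z (ee 1)) with hFdef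
  have hI := fun i k j => integrable_mul_fderiv_supp hg ((hC _ _ (h i) k).1.integrableOn) j
  have hF : ∀ i, Integrable (F i) := by
    intro i
    refine (((hI i 1 0).neg.add (hI i 0 1)).const_mul (1 / 2)).congr
      (Eventually.of_forall fun z => ?_)
    simp [hFdef]
  have hFle : ∀ i, ∫ z, ‖F i z‖ ≤ D * ((∫ z, |dipA (p i) (q i) 1 z|) +
      ∫ z, |dipA (p i) (q i) 0 z|) := by
    intro i
    have i1 := (hC _ _ (h i) 1).1.abs
    have i0 := (hC _ _ (h i) 0).1.abs
    rw [← integral_add i1 i0, ← integral_const_mul]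
    refine integral_mono (hF i).norm ((i1.add i0).const_mul _) fun z => ?_
    have b0 := fderiv_bound hg z 0
    have b1 := fderiv_bound hg z 1
    simp only [hFdef, Real.norm_eq_abs, Pi.add_apply]
    rw [abs_mul]
    have t1 : |(1 / 2 : ℝ)| ≤ 1 := by rw [abs_of_nonneg] <;> norm_num
    have t2 : |-(dipA (p i) (q i) 1 z) * fderiv ℝ g z (ee 0) +
        dipA (p i) (q i) 0 z * fderiv ℝ g z (ee 1)| ≤
        D * (|dipA (p i) (q i) 1 z| + |dipA (p i) (q i) 0 z|) := by
      refine (abs_add_le _ _).trans ?_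
      rw [abs_mul, abs_mul, abs_neg]
      have := mul_le_mul_of_nonneg_left b0 (abs_nonneg (dipA (p i) (q i) 1 z))
      have := mul_le_mul_of_nonneg_left b1 (abs_nonneg (dipA (p i) (q i) 0 z))
      linarith
    calc _ ≤ 1 * _ := mul_le_mul_of_nonneg_right t1 (abs_nonneg _)
      _ ≤ _ := by rw [one_mul]; exact t2
  have hsum : Summable fun i => ∫ z, ‖F i z‖ :=
    Summable.of_nonneg_of_le (fun i => integral_nonneg fun z => norm_nonneg _) hFle
      (((dip_sum hC h hs 1).add (dip_sum hC h hs 0)).mul_left _)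
  have h1 := integral_tsum_of_summable_integral_norm hF hsum
  have h2 : BP univ (DA p q) g = ∫ z, ∑' i, F i z := by
    unfold BP
    rw [Measure.restrict_univ]
    refine integral_congr_ae ?_
    filter_upwards [far_ae hs] with z hz
    have s1 := (DA_summable h hz 1).of_abs
    have s0 := (DA_summable h hz 0).of_abs
    simp only [hFdef, DA]
    rw [tsum_mul_left, Summable.tsum_add (s1.neg.mul_right _) (s0.mul_right _), tsum_mul_right,
      tsum_mul_right, tsum_neg]
  rw [h2, ← h1, ← tsum_mul_left]
  congr 1
  ext i
  rw [← BP_dip_univ hg hgc, BP, Measure.restrict_univ]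

lemma BP_DA {C : ℝ} (hC : ∀ x y : R2, x ≠ y → ∀ j,
      Integrable (dipA x y j) ∧ ∫ z, |dipA x y j z| ≤ C * dist x y)
    {p q : ℕ → R2} (h : ∀ i, p i ≠ q i) (hs : Summable fun i => dist (p i) (q i))
    {Ω : Set R2} (ho : IsOpen Ω) (hb : Bornology.IsBounded Ω)
    (hp : ∀ i, p i ∈ closure Ω) (hq : ∀ i, q i ∈ closure Ω) {φ : R2 → ℝ} (hφ : MemLip0 Ω φ) :
    BP Ω (DA p q) φ = Real.pi * ∑' i, (φ (p i) - φ (q i)) := by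
  obtain ⟨L, hL⟩ := lip0_ext hφ
  rw [BP_ext ho hφ, BP_DA_univ hC h hs hL (lip0_compact hb φ)]
  congr 2
  ext i
  rw [lip0_ext_eq hφ (hp i), lip0_ext_eq hφ (hq i)]

lemma DW_shift {p q : ℕ → R2} (h : ∀ i, p i ≠ q i) {z : R2}
    (hz : ∀ᶠ i in atTop, 3 * dist (p i) (q i) < dist z (q i)) :
    ∀ᶠ N in atTop, DW (fun i => p (i + N)) (fun i => q (i + N)) z = 1 := by
  obtain ⟨M, hM⟩ := eventually_atTop.1 hz
  filter_upwards [eventually_ge_atTop M] with N hN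
  have : ∀ i, dip (p (i + N)) (q (i + N)) z = 1 := fun i =>
    dip_far (h _) (hM _ (by omega))
  simp [DW, this]

/-! ### Translation between real and complex form -/

/-- Matrix of the complex partial derivatives. -/
def Gof (V : Fin 2 → R2 → ℂ) (z : R2) : Matrix (Fin 2) (Fin 2) ℝ :=
  Matrix.of fun i j => (![(V j z).re, (V j z).im] : Fin 2 → ℝ) i

/-- Complex partial derivatives of a matrix field. -/
def Vof (G : R2 → Matrix (Fin 2) (Fin 2) ℝ) (j : Fin 2) (z : R2) : ℂ := ⟨G z 0 j, G z 1 j⟩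

lemma Gof_Vof (G : R2 → Matrix (Fin 2) (Fin 2) ℝ) : Gof (Vof G) = G := by
  ext z i j
  fin_cases i <;> simp [Gof, Vof]

lemma symm_zero (q : ℂ) : (cc.symm q) 0 = q.re := by
  rw [← cc_re, LinearIsometryEquiv.apply_symm_apply]

lemma symm_one (q : ℂ) : (cc.symm q) 1 = q.im := by
  rw [← cc_im, LinearIsometryEquiv.apply_symm_apply]

lemma weak_aux {Ω : Set R2} {f : R2 → ℂ} {k : R2 → ℝ} {c : ℝ} (hf : IntegrableOn f Ω)
    (hk : Continuous k) (hkb : ∀ z, ‖k z‖ ≤ c) :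
    (∫ z in Ω, (k z : ℂ) * f z).re = ∫ z in Ω, (f z).re * k z ∧
    (∫ z in Ω, (k z : ℂ) * f z).im = ∫ z in Ω, (f z).im * k z := by
  have hi : IntegrableOn (fun z => (k z : ℂ) * f z) Ω := by
    refine Integrable.bdd_mul (c := c) hf
      (Complex.continuous_ofReal.comp hk).aestronglyMeasurable
      (Eventually.of_forall fun z => ?_)
    rw [Complex.norm_real]
    exact hkb z
  constructor
  · have := Complex.reCLM.integral_comp_comm hi
    rw [Complex.reCLM_apply] at this
    rw [← this]
    congr 1
    ext z
    simp [mul_comm]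
  · have := Complex.imCLM.integral_comp_comm hi
    rw [Complex.imCLM_apply] at this
    rw [← this]
    congr 1
    ext z
    simp [mul_comm]

lemma weak_iff {Ω : Set R2} {v : R2 → ℂ} {V : Fin 2 → R2 → ℂ} (hv : IntegrableOn v Ω)
    (hV : ∀ j, IntegrableOn (V j) Ω) :
    IsWeakGradient Ω (fun z => cc.symm (v z)) (Gof V) ↔ CW Ω v V := by
  have key : ∀ φ : R2 → ℝ, ContDiff ℝ (⊤ : ℕ∞) φ → HasCompactSupport φ → ∀ j : Fin 2,
      ((∀ i : Fin 2, (∫ x in Ω, (cc.symm (v x)) i * fderiv ℝ φ x (EuclideanSpace.single j 1)) =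
        - ∫ x in Ω, Gof V x i j * φ x) ↔
      ∫ z in Ω, ((fderiv ℝ φ z (ee j) : ℝ) : ℂ) * v z = -∫ z in Ω, (φ z : ℂ) * V j z) := by
    intro φ hφ hc j
    have c1 : Continuous fun z => fderiv ℝ φ z (ee j) :=
      (hφ.continuous_fderiv (by simp)).clm_apply continuous_const
    obtain ⟨b1, hb1⟩ := (hc.fderiv_apply ℝ (ee j)).exists_bound_of_continuous c1
    obtain ⟨b2, hb2⟩ := hc.exists_bound_of_continuous hφ.continuous
    have e1 := weak_aux hv c1 hb1
    have e2 := weak_aux (hV j) hφ.continuous hb2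
    rw [Complex.ext_iff, Complex.neg_re, Complex.neg_im, e1.1, e1.2, e2.1, e2.2,
      Fin.forall_fin_two]
    simp only [symm_zero, symm_one, Gof, Matrix.of_apply, Matrix.cons_val_zero,
      Matrix.cons_val_one, ee]
  constructor
  · intro h φ h1 h2 h3 j
    exact (key φ h1 h2 j).1 fun i => h φ h1 h2 h3 i j
  · intro h φ h1 h2 h3 i j
    exact (key φ h1 h2 j).2 (h φ h1 h2 h3 j) i

/-- The current of `v`. -/
def Jc (v : R2 → ℂ) (V : Fin 2 → R2 → ℂ) (j : Fin 2) (z : R2) : ℝ :=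
  (v z).re * (V j z).im - (v z).im * (V j z).re

lemma detPairing_eq (Ω : Set R2) (v : R2 → ℂ) (V : Fin 2 → R2 → ℂ) (φ : R2 → ℝ) :
    detPairing Ω (fun z => cc.symm (v z)) (Gof V) φ = BP Ω (Jc v V) φ := by
  unfold detPairing BP
  congr 1
  ext z
  simp only [Fin.sum_univ_two, lambdaVec, Jc, symm_zero, symm_one, Gof, Matrix.of_apply,
    Matrix.cons_val_zero, Matrix.cons_val_one, ee]
  ring

lemma BP_indicator {Ω : Set R2} (ho : IsOpen Ω) (φ : R2 → ℝ) (a : Fin 2 → R2 → ℝ) :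
    BP Ω a φ = BP Ω a (Ω.indicator φ) := by
  unfold BP
  refine setIntegral_congr_fun ho.measurableSet fun z hz => ?_
  have : fderiv ℝ (Ω.indicator φ) z = fderiv ℝ φ z := by
    refine Filter.EventuallyEq.fderiv_eq ?_
    filter_upwards [ho.mem_nhds hz] with w hw
    exact indicator_of_mem hw φ
  simp only [this]

lemma BP_add_set {Ω : Set R2} (ho : IsOpen Ω) {φ : R2 → ℝ} (hφ : MemLip0 Ω φ)
    {a b : Fin 2 → R2 → ℝ} (ha : ∀ j, IntegrableOn (a j) Ω) (hb : ∀ j, IntegrableOn (b j) Ω) :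
    BP Ω (fun j z => a j z + b j z) φ = BP Ω a φ + BP Ω b φ := by
  obtain ⟨L, hg⟩ := lip0_ext hφ
  simp only [BP_indicator ho φ]
  have hI := fun i j => integrable_mul_fderiv hg (ha i) j
  have hJ := fun i j => integrable_mul_fderiv hg (hb i) j
  unfold BP
  rw [← integral_add]
  · refine integral_congr_ae (Eventually.of_forall fun z => ?_)
    simp only
    ring
  · refine (((hI 1 0).neg.add (hI 0 1)).const_mul (1 / 2)).congr
      (Eventually.of_forall fun z => ?_)
    simp
  · refine (((hJ 1 0).neg.add (hJ 0 1)).const_mul (1 / 2)).congr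
      (Eventually.of_forall fun z => ?_)
    simp

lemma BP_congr {Ω : Set R2} {a b : Fin 2 → R2 → ℝ} (φ : R2 → ℝ)
    (h : ∀ᵐ z ∂(volume.restrict Ω), ∀ j, a j z = b j z) : BP Ω a φ = BP Ω b φ := by
  unfold BP
  refine integral_congr_ae ?_
  filter_upwards [h] with z hz
  rw [hz 0, hz 1]

lemma Jc_int {Ω : Set R2} {v : R2 → ℂ} {V : Fin 2 → R2 → ℂ}
    (hv : AEStronglyMeasurable v (volume.restrict Ω))
    (hv1 : ∀ᵐ z ∂(volume.restrict Ω), ‖v z‖ = 1)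
    (hV : ∀ j, IntegrableOn (V j) Ω) (j : Fin 2) : IntegrableOn (Jc v V j) Ω := by
  have hr : AEStronglyMeasurable (fun z => (v z).re) (volume.restrict Ω) :=
    Complex.continuous_re.comp_aestronglyMeasurable hv
  have hi : AEStronglyMeasurable (fun z => (v z).im) (volume.restrict Ω) :=
    Complex.continuous_im.comp_aestronglyMeasurable hv
  refine Integrable.sub (Integrable.bdd_mul (c := 1) (hV j).im hr ?_)
    (Integrable.bdd_mul (c := 1) (hV j).re hi ?_)
  · filter_upwards [hv1] with z hz
    rw [← hz]; exact Complex.abs_re_le_norm _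
  · filter_upwards [hv1] with z hz
    rw [← hz]; exact Complex.abs_im_le_norm _

lemma Jc_mul {w v X : ℂ} {a : ℝ} (hw : ‖w‖ = 1) (hv : ‖v‖ = 1) :
    (w * v).re * (w * (X + Complex.I * (a : ℂ) * v)).im -
      (w * v).im * (w * (X + Complex.I * (a : ℂ) * v)).re =
    (v.re * X.im - v.im * X.re) + a := by
  have h1 : w.re ^ 2 + w.im ^ 2 = 1 := by
    have : ‖w‖ ^ 2 = 1 := by rw [hw]; norm_num
    rw [Complex.sq_norm, Complex.normSq_apply] at this
    linear_combination this
  have h2 : v.re ^ 2 + v.im ^ 2 = 1 := by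
    have : ‖v‖ ^ 2 = 1 := by rw [hv]; norm_num
    rw [Complex.sq_norm, Complex.normSq_apply] at this
    linear_combination this
  simp only [Complex.mul_re, Complex.mul_im, Complex.add_re, Complex.add_im, Complex.I_re,
    Complex.I_im, Complex.ofReal_re, Complex.ofReal_im]
  linear_combination ((v.re * X.im - v.im * X.re) + a * (v.re ^ 2 + v.im ^ 2)) * h1 + a * h2

lemma frob_le (V VV : Fin 2 → R2 → ℂ) (z : R2) :
    frob (Gof V z - Gof VV z) ≤ ‖V 0 z - VV 0 z‖ + ‖V 1 z - VV 1 z‖ := by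
  unfold frob
  refine Real.sqrt_le_iff.2 ⟨by positivity, ?_⟩
  have h0 := Complex.sq_norm (V 0 z - VV 0 z)
  have h1 := Complex.sq_norm (V 1 z - VV 1 z)
  rw [Complex.normSq_apply] at h0 h1
  simp only [Complex.sub_re, Complex.sub_im] at h0 h1
  simp only [Fin.sum_univ_two, Matrix.sub_apply, Gof, Matrix.of_apply, Matrix.cons_val_zero,
    Matrix.cons_val_one]
  have := mul_nonneg (norm_nonneg (V 0 z - VV 0 z)) (norm_nonneg (V 1 z - VV 1 z))
  nlinarith
/-- **Lemma 5.2 (density: finite number of singular points).** If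
`Det(∇u) = π Σ_{i=1}^∞ (δ_{x_i} − δ_{y_i})` with `Σ|x_i − y_i| < ∞`, then for every
`ε > 0` there is `u_ε ∈ W^{1,1}(Ω;S¹)` whose Jacobian is the truncated sum
`π Σ_{i<N_ε} (δ_{x_i} − δ_{y_i})`, with `‖u−u_ε‖_{W^{1,1}} + ‖Det(∇u)−Det(∇u_ε)‖_flat < ε`. -/
theorem density_finite_singular_points (Ω : Set R2) (hΩo : IsOpen Ω)
    (hΩb : Bornology.IsBounded Ω) (hΩc : IsConnected Ω) (hΩl : HasLipschitzBoundary Ω)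
    (u : R2 → R2) (G : R2 → Matrix (Fin 2) (Fin 2) ℝ)
    (hu : MemW11 Ω u G) (hS : SphereValued Ω u)
    (x y : ℕ → R2)
    (hmem : ∀ i, x i ∈ closure Ω ∧ y i ∈ closure Ω ∧ x i ≠ y i)
    (hsum : Summable fun i => dist (x i) (y i))
    (hrep : ∀ φ : R2 → ℝ, MemLip0 Ω φ →
      Summable (fun i => φ (x i) - φ (y i)) ∧
      detPairing Ω u G φ = Real.pi * ∑' i, (φ (x i) - φ (y i))) :
    ∀ ε : ℝ, 0 < ε →
      ∃ (uε : R2 → R2) (Gε : R2 → Matrix (Fin 2) (Fin 2) ℝ) (Nε : ℕ),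
        MemW11 Ω uε Gε ∧ SphereValued Ω uε ∧
        (∀ φ : R2 → ℝ, MemLip0 Ω φ →
          detPairing Ω uε Gε φ = Real.pi * ∑ i ∈ Finset.range Nε, (φ (x i) - φ (y i))) ∧
        ENNReal.ofReal (∫ z in Ω, (‖u z - uε z‖ + frob (G z - Gε z))) +
            flatNorm Ω 1 (fun φ => detPairing Ω u G φ - detPairing Ω uε Gε φ) <
          ENNReal.ofReal ε := by
  intro ε hε
  obtain ⟨C, hC0, hC⟩ := dipA_int
  obtain ⟨hu1, hu2, hu3⟩ := hu
  set v : R2 → ℂ := fun z => cc (u z) with hvdef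
  set V : Fin 2 → R2 → ℂ := Vof G with hVdef
  have hus : (fun z => cc.symm (v z)) = u := by
    ext1 z
    simp [hvdef]
  have hGV : Gof V = G := Gof_Vof G
  have hvi : IntegrableOn v Ω :=
    (cc : R2 →L[ℝ] ℂ).integrable_comp hu1
  have hvm : AEStronglyMeasurable v (volume.restrict Ω) := hvi.aestronglyMeasurable
  have hv1 : ∀ᵐ z ∂(volume.restrict Ω), ‖v z‖ = 1 := by
    filter_upwards [hS] with z hz
    rw [hvdef]
    simpa using hz
  have hVi : ∀ j, IntegrableOn (V j) Ω := by
    intro j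
    have h1 : IntegrableOn (fun z => ((G z 0 j : ℝ) : ℂ)) Ω := (hu2 0 j).ofReal
    have h2 : IntegrableOn (fun z => ((G z 1 j : ℝ) : ℂ) * Complex.I) Ω :=
      Integrable.mul_const (hu2 1 j).ofReal _
    refine (h1.add h2).congr (Eventually.of_forall fun z => ?_)
    simp only [hVdef, Vof, Pi.add_apply]
    apply Complex.ext <;> simp
  have hCW : CW Ω v V := by
    rw [← weak_iff hvi hVi, hus, hGV]
    exact hu3
  have hne : ∀ i, y i ≠ x i := fun i => (hmem i).2.2.symm
  have hsum' : Summable fun i => dist (y i) (x i) := by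
    simpa [dist_comm] using hsum
  have hneN : ∀ N i, y (i + N) ≠ x (i + N) := fun N i => hne _
  have hsN : ∀ N, Summable fun i => dist (y (i + N)) (x (i + N)) := fun N =>
    (summable_nat_add_iff N).2 hsum'
  set W : ℕ → R2 → ℂ := fun N => DW (fun i => y (i + N)) (fun i => x (i + N)) with hW
  set A : ℕ → Fin 2 → R2 → ℝ := fun N => DA (fun i => y (i + N)) (fun i => x (i + N)) with hA
  have hM : ∀ N, IsMult Ω (W N) (A N) := fun N => isMult_DW hC (hneN N) (hsN N) hΩb
  have hAi := fun N j => DA_int hC (hneN N) (hsN N) j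
  set T : ℕ → ℝ := fun N => ∑' i, dist (y (i + N)) (x (i + N)) with hT
  have hTlim : Tendsto T atTop (𝓝 0) := tendsto_sum_nat_add fun i => dist (y i) (x i)
  set E : ℕ → ℝ := fun N => ∫ z in Ω, ‖1 - W N z‖ * (1 + ‖V 0 z‖ + ‖V 1 z‖) with hE
  have hone : IntegrableOn (fun _ : R2 => (1 : ℝ)) Ω :=
    integrableOn_const hΩb.measure_lt_top.ne
  have hBint : IntegrableOn (fun z => 1 + ‖V 0 z‖ + ‖V 1 z‖) Ω :=
    (hone.add (hVi 0).norm).add (hVi 1).norm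
  have hEm : ∀ N, AEStronglyMeasurable (fun z => ‖1 - W N z‖ * (1 + ‖V 0 z‖ + ‖V 1 z‖))
      (volume.restrict Ω) := fun N =>
    (aestronglyMeasurable_const.sub (hM N).meas).norm.mul hBint.aestronglyMeasurable
  have hEb : ∀ N, ∀ᵐ z ∂(volume.restrict Ω),
      ‖‖1 - W N z‖ * (1 + ‖V 0 z‖ + ‖V 1 z‖)‖ ≤ 2 * (1 + ‖V 0 z‖ + ‖V 1 z‖) := by
    intro N
    filter_upwards [(hM N).norm] with z hz
    rw [Real.norm_of_nonneg (by positivity)]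
    refine mul_le_mul_of_nonneg_right ?_ (by positivity)
    refine (norm_sub_le _ _).trans ?_
    rw [hz, norm_one]
    norm_num
  have hElim : Tendsto E atTop (𝓝 0) := by
    have := tendsto_integral_of_dominated_convergence
      (μ := volume.restrict Ω) (f := fun _ : R2 => (0 : ℝ))
      (fun z => 2 * (1 + ‖V 0 z‖ + ‖V 1 z‖)) hEm (hBint.const_mul 2) hEb (by
        filter_upwards [ae_restrict_of_ae (s := Ω) (far_ae hsum')] with z hz
        refine tendsto_const_nhds.congr' ?_
        filter_upwards [DW_shift hne hz] with N hN
        simp only [hW]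
        rw [hN]
        simp)
    simpa using this
  have hlim : Tendsto (fun N => E N + (C * T N + C * T N) + Real.pi * T N) atTop (𝓝 0) := by
    have := (hElim.add ((hTlim.const_mul C).add (hTlim.const_mul C))).add
      (hTlim.const_mul Real.pi)
    simpa using this
  obtain ⟨N, hN⟩ := (hlim.eventually (gt_mem_nhds hε)).exists
  set vv : R2 → ℂ := fun z => W N z * v z with hvv
  set VV : Fin 2 → R2 → ℂ := fun j z => W N z * (V j z + Complex.I * (A N j z : ℂ) * v z) with hVV
  have hvvm : AEStronglyMeasurable vv (volume.restrict Ω) := (hM N).meas.mul hvm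
  have hvv1 : ∀ᵐ z ∂(volume.restrict Ω), ‖vv z‖ = 1 := (hM N).mul_norm hv1
  have hvvi : IntegrableOn vv Ω :=
    hone.mono' hvvm (hvv1.mono fun z hz => hz.le)
  have hVVi : ∀ j, IntegrableOn (VV j) Ω := fun j => (hM N).integrable hvm hv1 hVi j
  have hCW' : CW Ω vv VV := (hM N).rule v V hvm hv1 hVi hCW
  have hdet : ∀ φ : R2 → ℝ, MemLip0 Ω φ →
      detPairing Ω (fun z => cc.symm (vv z)) (Gof VV) φ =
        Real.pi * ∑ i ∈ Finset.range N, (φ (x i) - φ (y i)) := by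
    intro φ hφ
    obtain ⟨hφs, hφe⟩ := hrep φ hφ
    have h1 : detPairing Ω u G φ = BP Ω (Jc v V) φ := by
      rw [← detPairing_eq, hus, hGV]
    have h2 : BP Ω (Jc vv VV) φ = BP Ω (Jc v V) φ + BP Ω (A N) φ := by
      rw [← BP_add_set hΩo hφ (Jc_int hvm hv1 hVi) (hM N).int]
      refine BP_congr φ ?_
      filter_upwards [(hM N).norm, hv1] with z hz1 hz2 j
      exact Jc_mul hz1 hz2
    have h3 : BP Ω (A N) φ = Real.pi * ∑' i, (φ (y (i + N)) - φ (x (i + N))) :=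
      BP_DA hC (hneN N) (hsN N) hΩo hΩb (fun i => (hmem _).2.1) (fun i => (hmem _).1) hφ
    have h4 : ∑' i, (φ (y (i + N)) - φ (x (i + N))) = -∑' i, (φ (x (i + N)) - φ (y (i + N))) := by
      rw [← tsum_neg]
      congr 1
      ext i
      ring
    have h5 := hφs.sum_add_tsum_nat_add N
    rw [detPairing_eq, h2, ← h1, hφe, h3, h4, ← h5]
    ring
  refine ⟨fun z => cc.symm (vv z), Gof VV, N, ⟨?_, ?_, (weak_iff hvvi hVVi).2 hCW'⟩, ?_, hdet, ?_⟩
  · exact (cc.symm : ℂ →L[ℝ] R2).integrable_comp hvvi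
  · intro i j
    fin_cases i
    · refine (hVVi j).re.congr (Eventually.of_forall fun z => ?_)
      simp [Gof]
    · refine (hVVi j).im.congr (Eventually.of_forall fun z => ?_)
      simp [Gof]
  · filter_upwards [hvv1] with z hz
    rw [LinearIsometryEquiv.norm_map]
    exact hz
  · have hI : ∫ z in Ω, (‖u z - cc.symm (vv z)‖ + frob (G z - Gof VV z)) ≤
        E N + (C * T N + C * T N) := by
      have a0 := hAi N 0
      have a1 := hAi N 1
      have i0 : IntegrableOn (fun z => |A N 0 z|) Ω := a0.1.abs.integrableOn
      have i1 : IntegrableOn (fun z => |A N 1 z|) Ω := a1.1.abs.integrableOn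
      have iE : IntegrableOn (fun z => ‖1 - W N z‖ * (1 + ‖V 0 z‖ + ‖V 1 z‖)) Ω :=
        (hBint.const_mul 2).mono' (hEm N) (hEb N)
      have b0 : ∫ z in Ω, |A N 0 z| ≤ C * T N :=
        (setIntegral_le_integral a0.1.abs (Eventually.of_forall fun z => abs_nonneg _)).trans a0.2
      have b1 : ∫ z in Ω, |A N 1 z| ≤ C * T N :=
        (setIntegral_le_integral a1.1.abs (Eventually.of_forall fun z => abs_nonneg _)).trans a1.2
      calc _ ≤ ∫ z in Ω, (‖1 - W N z‖ * (1 + ‖V 0 z‖ + ‖V 1 z‖) + (|A N 0 z| + |A N 1 z|)) := by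
            refine integral_mono_of_nonneg (Eventually.of_forall fun z => ?_)
              (iE.add (i0.add i1)) ?_
            · exact add_nonneg (norm_nonneg _) (Real.sqrt_nonneg _)
            · filter_upwards [(hM N).norm, hv1] with z hz1 hz2
              have e1 : ‖u z - cc.symm (vv z)‖ = ‖1 - W N z‖ := by
                rw [← LinearIsometryEquiv.norm_map cc, map_sub,
                  LinearIsometryEquiv.apply_symm_apply]
                have : cc (u z) - vv z = (1 - W N z) * v z := by
                  simp only [hvv, hvdef]; ring
                rw [this, norm_mul, hz2, mul_one]
              have e2 : ∀ j, ‖V j z - VV j z‖ ≤ ‖1 - W N z‖ * ‖V j z‖ + |A N j z| := by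
                intro j
                have : V j z - VV j z =
                    (1 - W N z) * V j z - W N z * (Complex.I * (A N j z : ℂ) * v z) := by
                  simp only [hVV]; ring
                rw [this]
                refine (norm_sub_le _ _).trans (le_of_eq ?_)
                rw [norm_mul, norm_mul, norm_mul, norm_mul, hz1, hz2, Complex.norm_I,
                  Complex.norm_real, Real.norm_eq_abs]
                ring
              have e3 := frob_le V VV z
              rw [hGV] at e3
              have := e2 0
              have := e2 1
              rw [e1]
              linarith
        _ = E N + ((∫ z in Ω, |A N 0 z|) + ∫ z in Ω, |A N 1 z|) := by
            have i01 : IntegrableOn (fun z => |A N 0 z| + |A N 1 z|) Ω := i0.add i1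
            rw [integral_add iE i01, integral_add i0 i1]
        _ ≤ _ := by linarith
    have hF : flatNorm Ω 1 (fun φ => detPairing Ω u G φ -
        detPairing Ω (fun z => cc.symm (vv z)) (Gof VV) φ) ≤ ENNReal.ofReal (Real.pi * T N) := by
      unfold flatNorm flatNormOn
      refine iSup₂_le fun φ hφ => ENNReal.ofReal_le_ofReal ?_
      obtain ⟨f1, f2, -⟩ := hφ
      have hφ0 : MemLip0 Ω φ := ⟨⟨1, f1⟩, f2⟩
      obtain ⟨hφs, hφe⟩ := hrep φ hφ0
      have h5 := hφs.sum_add_tsum_nat_add N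
      beta_reduce
      rw [hdet φ hφ0, hφe, ← h5, ← mul_sub, add_sub_cancel_left]
      refine mul_le_mul_of_nonneg_left ?_ Real.pi_nonneg
      refine ((summable_nat_add_iff N).2 hφs).tsum_le_tsum (fun i => ?_) (hsN N)
      have := f1.dist_le_mul _ (hmem (i + N)).1 _ (hmem (i + N)).2.1
      rw [NNReal.coe_one, one_mul, Real.dist_eq, dist_comm] at this
      exact (le_abs_self _).trans this
    have hT0 : 0 ≤ T N := tsum_nonneg fun i => dist_nonneg
    have hI0 : 0 ≤ ∫ z in Ω, (‖u z - cc.symm (vv z)‖ + frob (G z - Gof VV z)) :=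
      integral_nonneg fun z => add_nonneg (norm_nonneg _) (Real.sqrt_nonneg _)
    refine (add_le_add_right hF _).trans_lt ?_
    rw [← ENNReal.ofReal_add hI0 (by positivity)]
    refine (ENNReal.ofReal_lt_ofReal_iff hε).2 ?_
    linarith
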